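/- arXiv:2309.02584 — 8 statements merged into one kernel-verified Lean document; each statement's English description precedes it below -/
import Mathlib

section
/- Let p ≥ 1, d ≥ 1, and let f : ℝ^d → ℂ^{p×p} be entrywise integrable such that for almost every x the matrix f(x) is Hermitian positive semidefinite and f(−x) = conj(f(x)) (so that C(s) := ∫_{ℝ^d} e^{i⟨s,x⟩} f(x) dx is real-matrix valued). Then C is covariance-symmetric, i.e., C(s) = C(−s) for all s ∈ ℝ^d, if and only if the spectral density is real and symmetric: f(x) = f(−x) = conj(f(x)) (entrywise) for almost every x ∈ ℝ^d. -/
/-!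
Substituting `x ↦ -x` shows that `C(-s)` is the Fourier integral of `x ↦ f (-x)`. Hence `C(s) = C(-s)`
for all `s` says that each entry of `f(x) - f(-x)` has vanishing Fourier integral, and by injectivity
of the Fourier transform on `L¹` this means `f(x) = f(-x)` almost everywhere; the hypothesis
`f(-x) = conj (f x)` then turns evenness into realness.

The injectivity (`ae_eq_zero_of_fourier_integral_eq_zero`) is proved by duality: every test function
`φ` is the Fourier transform of a Schwartz function `ψ`, so `∫ φ g = ∫ (𝓕 ψ) g = ∫ ψ (𝓕 g) = 0`.
-/

open MeasureTheory Complex Topology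
open scoped RealInnerProductSpace ComplexOrder

open scoped FourierTransform SchwartzMap ContDiff

/-- Injectivity of the Fourier transform on `L¹`. -/
lemma ae_eq_zero_of_fourier_integral_eq_zero {d : ℕ} (g : EuclideanSpace ℝ (Fin d) → ℂ)
    (hg : Integrable g)
    (h : ∀ s : EuclideanSpace ℝ (Fin d),
      ∫ x, Complex.exp (Complex.I * ((⟪s, x⟫ : ℝ) : ℂ)) * g x = 0) :
    ∀ᵐ x, g x = 0 := by
  -- Mathlib's transform has kernel `exp (-2πi⟪x, w⟫)`, i.e. `s = -2π w`.
  have hF : ∀ w, 𝓕 g w = 0 := by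
    intro w
    rw [Real.fourier_eq', ← h ((-2 * Real.pi) • w)]
    congr 1
    ext x
    rw [smul_eq_mul, real_inner_smul_left, real_inner_comm, mul_comm Complex.I]
  refine ae_eq_zero_of_integral_contDiff_smul_eq_zero hg.locallyIntegrable fun φ hφ hφc => ?_
  have hc : HasCompactSupport (fun x => (φ x : ℂ)) :=
    hφc.comp_left (g := fun r : ℝ => (r : ℂ)) Complex.ofReal_zero
  let Φ : 𝓢(EuclideanSpace ℝ (Fin d), ℂ) :=
    hc.toSchwartzMap (Complex.ofRealCLM.contDiff.comp hφ)
  have hΦ : 𝓕 ((𝓕⁻ Φ : 𝓢(EuclideanSpace ℝ (Fin d), ℂ)) : EuclideanSpace ℝ (Fin d) → ℂ) = Φ := by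
    rw [← SchwartzMap.fourier_coe, FourierTransform.fourier_fourierInv_eq]
  have key := VectorFourier.integral_fourierIntegral_smul_eq_flip
    (μ := volume) (ν := volume) (L := innerₗ (EuclideanSpace ℝ (Fin d))) (e := Real.fourierChar)
    Real.continuous_fourierChar continuous_inner
    (𝓕⁻ Φ : 𝓢(EuclideanSpace ℝ (Fin d), ℂ)).integrable hg
  rw [flip_innerₗ] at key
  change ∫ ξ, 𝓕 ((𝓕⁻ Φ : 𝓢(EuclideanSpace ℝ (Fin d), ℂ)) : EuclideanSpace ℝ (Fin d) → ℂ) ξ • g ξ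
    = ∫ x, (𝓕⁻ Φ : 𝓢(EuclideanSpace ℝ (Fin d), ℂ)) x • 𝓕 g x at key
  rw [hΦ] at key
  simp only [hF, smul_zero, integral_zero] at key
  rw [← key]
  congr 1

/-- For an entrywise integrable, a.e. Hermitian positive semidefinite spectral
density `f : ℝ^d → ℂ^{p×p}` satisfying `f(−x) = conj(f(x))` a.e. (so that the entrywise Fourier
integral `C(s) = ∫ e^{i⟨s,x⟩} f(x) dx` is real-matrix valued), the function `C` is
covariance-symmetric, i.e. `C(s) = C(−s)` for all `s`, if and only if the spectral density is
real and symmetric: `f(x) = f(−x) = conj(f(x))` entrywise for almost every `x`. -/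
theorem stmt_2 (p d : ℕ) (hp : 1 ≤ p) (hd : 1 ≤ d)
    (f : EuclideanSpace ℝ (Fin d) → Matrix (Fin p) (Fin p) ℂ)
    (hint : ∀ j k, Integrable (fun x => f x j k))
    (hpsd : ∀ᵐ (x : EuclideanSpace ℝ (Fin d)), (f x).PosSemidef)
    (hherm : ∀ᵐ (x : EuclideanSpace ℝ (Fin d)), ∀ j k, f (-x) j k = (starRingEnd ℂ) (f x j k))
    (C : EuclideanSpace ℝ (Fin d) → Matrix (Fin p) (Fin p) ℂ)
    (hC : ∀ s j k, C s j k = ∫ x, Complex.exp (Complex.I * ((⟪s, x⟫ : ℝ) : ℂ)) * f x j k) :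
    (∀ s, C s = C (-s)) ↔
      (∀ᵐ (x : EuclideanSpace ℝ (Fin d)), ∀ j k,
        f x j k = f (-x) j k ∧ f x j k = (starRingEnd ℂ) (f x j k)) := by
  -- `C (-s)` is the Fourier integral of the reflected density.
  have hneg : ∀ s j k, C (-s) j k =
      ∫ x, Complex.exp (Complex.I * ((⟪s, x⟫ : ℝ) : ℂ)) * f (-x) j k := by
    intro s j k
    rw [hC, ← integral_neg_eq_self]
    simp only [inner_neg_neg]
  constructor
  · intro h
    have hjk : ∀ j k, ∀ᵐ x, f x j k - f (-x) j k = 0 := by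
      intro j k
      have hint' : Integrable (fun x => f (-x) j k) := (hint j k).comp_neg
      refine ae_eq_zero_of_fourier_integral_eq_zero _ ((hint j k).sub hint') fun s => ?_
      -- multiplying by the unimodular kernel preserves integrability
      have hmul : ∀ u : EuclideanSpace ℝ (Fin d) → ℂ, Integrable u →
          Integrable (fun x => Complex.exp (Complex.I * ((⟪s, x⟫ : ℝ) : ℂ)) * u x) := by
        intro u hu
        refine hu.bdd_mul (c := 1) (Continuous.aestronglyMeasurable (by fun_prop)) ?_
        refine Filter.Eventually.of_forall fun x => ?_
        rw [mul_comm, Complex.norm_exp_ofReal_mul_I]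
      simp only [mul_sub]
      rw [integral_sub (hmul _ (hint j k)) (hmul _ hint'), ← hC, ← hneg, ← h s, sub_self]
    have hall : ∀ᵐ x, ∀ j k, f x j k - f (-x) j k = 0 :=
      ae_all_iff.2 fun j => ae_all_iff.2 fun k => hjk j k
    filter_upwards [hall, hherm] with x hx hx' j k
    have he := sub_eq_zero.1 (hx j k)
    exact ⟨he, he.trans (hx' j k)⟩
  · intro h s
    ext j k
    rw [hneg, hC]
    refine integral_congr_ae ?_
    filter_upwards [h] with x hx
    rw [(hx j k).1]
end

section
/- For all a_j, a_k, ν_j, ν_k > 0, the integral of g_{jk} over the real line equals ∫_ℝ (a_j + i x)^{−ν_j − 1/2} (a_k − i x)^{−ν_k − 1/2} dx = 2π Γ(ν_j + ν_k) / ( Γ(ν_j + 1/2) Γ(ν_k + 1/2) (a_j + a_k)^{ν_j + ν_k} ). In particular this gives the value C_{jk}(0) of the multivariate Matérn cross-covariance with real directional measure at lag zero. -/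
/-!
Write `s = ν_j + 1/2` and `t = ν_k + 1/2`, so that `s, t > 0` and `s + t > 1`. The function
`(a + 2πix)^{-s} Γ(s)` is the Fourier transform of the Gamma kernel `1_{y>0} y^{s-1} e^{-ay}`
(`fourier_gammaKernel`, from the Laplace transform `laplace_gamma` at a complex argument).

If `t > 1`, the transform of the second kernel is integrable, so Parseval's formula and Fourier
inversion turn the integral into `∫_0^∞ y^{s+t-2} e^{-(a+b)y} dy`, a Gamma integral
(`integral_line_of_one_lt`).

If `t ≤ 1` that transform is no longer integrable. The general case follows from `t + 1 > 1` by the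
recursion `integral_line_step`, obtained by integrating the derivative of
`(a + ix)^{1-s} (b - ix)^{-t}`, which vanishes at infinity exactly because `s + t > 1`.
-/

open MeasureTheory Complex
open Set Filter Topology FourierTransform

/-- The unnormalised Gamma density `y ↦ 1_{y > 0} y^{s-1} e^{-ay}`, as a complex-valued function. -/
noncomputable def gammaKernel (s a : ℝ) : ℝ → ℂ :=
  (Ioi 0).indicator fun y ↦ ((y ^ (s - 1) * Real.exp (-(a * y)) : ℝ) : ℂ)

lemma integrableOn_rpow_mul_exp {s a : ℝ} (hs : 0 < s) (ha : 0 < a) :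
    IntegrableOn (fun y : ℝ ↦ y ^ (s - 1) * Real.exp (-(a * y))) (Ioi 0) := by
  have := integrableOn_rpow_mul_exp_neg_mul_rpow (s := s - 1) (p := 1) (by linarith) one_pos ha
  simpa using this

lemma integrable_gammaKernel {s a : ℝ} (hs : 0 < s) (ha : 0 < a) :
    Integrable (gammaKernel s a) := by
  rw [gammaKernel, integrable_indicator_iff measurableSet_Ioi]
  exact (integrableOn_rpow_mul_exp hs ha).ofReal

lemma differentiableAt_laplace {s : ℝ} (hs : 0 < s) {z : ℂ} (hz : 0 < z.re) :
    DifferentiableAt ℂ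
      (fun z : ℂ ↦ ∫ t in Ioi (0 : ℝ), ((t ^ (s - 1) : ℝ) : ℂ) * cexp (-(z * t))) z := by
  have hmeas (z : ℂ) : AEStronglyMeasurable
      (fun t : ℝ ↦ ((t ^ (s - 1) : ℝ) : ℂ) * cexp (-(z * t))) (volume.restrict (Ioi 0)) := by
    apply Measurable.aestronglyMeasurable; fun_prop
  refine (hasDerivAt_integral_of_dominated_loc_of_deriv_le
    (F' := fun z t ↦ ((t ^ (s - 1) : ℝ) : ℂ) * (cexp (-(z * t)) * (-t)))
    (s := {w : ℂ | z.re / 2 < w.re}) (bound := fun t ↦ t ^ (s + 1 - 1) * Real.exp (-(z.re / 2 * t)))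
    ((isOpen_lt continuous_const continuous_re).mem_nhds (by simp; linarith))
    (.of_forall hmeas) ?_ ?_ ?_ (integrableOn_rpow_mul_exp (by linarith) (by linarith))
    ?_).2.differentiableAt
  · refine (integrableOn_rpow_mul_exp hs hz).mono' (hmeas z) ?_
    filter_upwards [ae_restrict_mem measurableSet_Ioi] with t ht
    rw [norm_mul, norm_real, Complex.norm_exp, Real.norm_of_nonneg (Real.rpow_nonneg (le_of_lt ht) _)]
    simp
  · apply Measurable.aestronglyMeasurable; fun_prop
  · filter_upwards [ae_restrict_mem measurableSet_Ioi] with t (ht : 0 < t) w (hw : _ < _)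
    rw [norm_mul, norm_mul, norm_neg, norm_real, norm_real, Complex.norm_exp,
      Real.norm_of_nonneg (Real.rpow_nonneg ht.le _), Real.norm_of_nonneg ht.le,
      add_sub_right_comm, Real.rpow_add_one ht.ne', mul_comm (Real.exp _), ← mul_assoc]
    gcongr
    simp
    gcongr
  · filter_upwards with t w _
    have : HasDerivAt (fun w : ℂ ↦ -(w * t)) (-(t : ℂ)) w := by
      simpa using (hasDerivAt_mul_const (x := w) (t : ℂ)).fun_neg
    exact this.cexp.const_mul _

/-- The Gamma integral `∫_0^∞ t^{s-1} e^{-zt} dt = Γ(s) z^{-s}` for `Re z > 0`. It is known for real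
`z > 0`; both sides are holomorphic on the right half-plane, so the identity theorem applies. -/
lemma laplace_gamma {s : ℝ} (hs : 0 < s) {z : ℂ} (hz : 0 < z.re) :
    ∫ t in Ioi (0 : ℝ), ((t ^ (s - 1) : ℝ) : ℂ) * cexp (-(z * t)) =
      Real.Gamma s * z ^ ((-s : ℝ) : ℂ) := by
  have hopen : IsOpen {w : ℂ | 0 < w.re} := isOpen_lt continuous_const continuous_re
  refine AnalyticOnNhd.eqOn_of_preconnected_of_frequently_eq (𝕜 := ℂ) (U := {w : ℂ | 0 < w.re})
    (z₀ := 1)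
    (f := fun z : ℂ ↦ ∫ t in Ioi (0 : ℝ), ((t ^ (s - 1) : ℝ) : ℂ) * cexp (-(z * t)))
    (g := fun z : ℂ ↦ Real.Gamma s * z ^ ((-s : ℝ) : ℂ)) ?_ ?_ ?_ ?_ ?_ hz
  · exact DifferentiableOn.analyticOnNhd
      (fun w hw ↦ (differentiableAt_laplace hs hw).differentiableWithinAt) hopen
  · refine DifferentiableOn.analyticOnNhd (fun w hw ↦ ?_) hopen
    exact ((differentiableAt_id.cpow_const (Or.inl hw)).const_mul _).differentiableWithinAt
  · exact (convex_halfSpace_re_gt 0).isPreconnected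
  · simp
  · have htend : Tendsto (fun r : ℝ ↦ (r : ℂ)) (𝓝[≠] 1) (𝓝[≠] 1) := by
      refine tendsto_nhdsWithin_iff.2 ⟨?_, ?_⟩
      · exact (continuous_ofReal.tendsto' 1 1 (by simp)).mono_left nhdsWithin_le_nhds
      · filter_upwards [self_mem_nhdsWithin] with r hr
        simpa using hr
    refine htend.frequently (Eventually.frequently ?_)
    filter_upwards [nhdsWithin_le_nhds (lt_mem_nhds one_pos)] with r (hr : 0 < r)
    have h := Real.integral_rpow_mul_exp_neg_mul_Ioi hs hr
    rw [one_div, Real.inv_rpow hr.le, ← Real.rpow_neg hr.le] at h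
    rw [← ofReal_cpow hr.le, mul_comm, ← ofReal_mul, ← h, ← integral_complex_ofReal]
    push_cast
    rfl

lemma fourier_gammaKernel {s a : ℝ} (hs : 0 < s) (ha : 0 < a) (x : ℝ) :
    𝓕 (gammaKernel s a) x =
      Real.Gamma s * ((a : ℂ) + (2 * Real.pi * x : ℝ) * I) ^ ((-s : ℝ) : ℂ) := by
  rw [← laplace_gamma hs (by simpa using ha), Real.fourier_eq', ← integral_indicator measurableSet_Ioi]
  congr 1 with t
  by_cases ht : t ∈ Ioi (0 : ℝ)
  · simp only [gammaKernel, indicator_of_mem ht, smul_eq_mul]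
    rw [ofReal_mul (t ^ (s - 1)), mul_left_comm, ofReal_exp, ← Complex.exp_add]
    congr 2
    simp
    ring
  · simp [gammaKernel, indicator_of_notMem ht]

/-- `|a + ix|` is comparable to `1 + |x|`, which bounds its powers for exponents of either sign. -/
lemma exists_norm_cpow_le {a : ℝ} (ha : 0 < a) (p : ℝ) : ∃ C : ℝ, 0 ≤ C ∧ ∀ x : ℝ,
    ‖((a : ℂ) + x * I) ^ (p : ℂ)‖ ≤ C * (1 + ‖x‖) ^ p := by
  have hre (x : ℝ) : a ≤ ‖(a : ℂ) + x * I‖ := by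
    simpa using (le_abs_self _).trans (abs_re_le_norm ((a : ℂ) + x * I))
  rcases le_total 0 p with hp | hp
  · refine ⟨(a + 1) ^ p, by positivity, fun x ↦ ?_⟩
    rw [norm_cpow_real, ← Real.mul_rpow (by positivity) (by positivity)]
    gcongr
    calc _ ≤ ‖(a : ℂ)‖ + ‖x * I‖ := norm_add_le _ _
      _ = a + ‖x‖ := by simp [abs_of_pos ha]
      _ ≤ _ := by nlinarith [norm_nonneg x]
  · have hc : 0 < min a 1 / 2 := by positivity
    refine ⟨(min a 1 / 2) ^ p, by positivity, fun x ↦ ?_⟩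
    rw [norm_cpow_real, ← Real.mul_rpow hc.le (by positivity)]
    refine Real.rpow_le_rpow_of_nonpos (by positivity) ?_ hp
    have him : ‖x‖ ≤ ‖(a : ℂ) + x * I‖ := by
      simpa using abs_im_le_norm ((a : ℂ) + x * I)
    nlinarith [hre x, min_le_left a 1, min_le_right a 1, norm_nonneg x]

lemma exists_norm_mul_cpow_le {a b : ℝ} (ha : 0 < a) (hb : 0 < b) (p q : ℝ) : ∃ C : ℝ, ∀ x : ℝ,
    ‖((a : ℂ) + x * I) ^ (p : ℂ) * ((b : ℂ) - x * I) ^ (q : ℂ)‖ ≤ C * (1 + ‖x‖) ^ (p + q) := by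
  obtain ⟨C, hC0, hC⟩ := exists_norm_cpow_le ha p
  obtain ⟨D, hD0, hD⟩ := exists_norm_cpow_le hb q
  refine ⟨C * D, fun x ↦ ?_⟩
  have hD' := hD (-x)
  rw [ofReal_neg, neg_mul, ← sub_eq_add_neg, norm_neg] at hD'
  rw [norm_mul, Real.rpow_add (by positivity), mul_mul_mul_comm]
  gcongr
  exact hC x

lemma continuous_cpow_line {a : ℝ} (ha : 0 < a) (p : ℝ) :
    Continuous fun x : ℝ ↦ ((a : ℂ) + x * I) ^ (p : ℂ) :=
  Continuous.cpow (by fun_prop) continuous_const fun x ↦ Or.inl (by simpa using ha)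

lemma continuous_cpow_line' {a : ℝ} (ha : 0 < a) (p : ℝ) :
    Continuous fun x : ℝ ↦ ((a : ℂ) - x * I) ^ (p : ℂ) :=
  Continuous.cpow (by fun_prop) continuous_const fun x ↦ Or.inl (by simpa using ha)

lemma integrable_mul_cpow {a b : ℝ} (ha : 0 < a) (hb : 0 < b) {p q : ℝ} (h : p + q < -1) :
    Integrable fun x : ℝ ↦ ((a : ℂ) + x * I) ^ (p : ℂ) * ((b : ℂ) - x * I) ^ (q : ℂ) := by
  obtain ⟨C, hC⟩ := exists_norm_mul_cpow_le ha hb p q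
  have := (integrable_one_add_norm (E := ℝ) (μ := volume) (r := -(p + q))
    (by simp; linarith)).const_mul C
  rw [neg_neg] at this
  exact this.mono'
    ((continuous_cpow_line ha p).mul (continuous_cpow_line' hb q)).aestronglyMeasurable
    (.of_forall hC)

/-- The integral when one exponent exceeds `1`: Parseval's formula and Fourier inversion reduce it to
the integral of the product of two Gamma kernels. -/
lemma integral_line_of_one_lt {s t a b : ℝ} (hs : 0 < s) (ht : 1 < t) (ha : 0 < a) (hb : 0 < b) :
    ∫ x : ℝ, ((a : ℂ) + x * I) ^ ((-s : ℝ) : ℂ) * ((b : ℂ) - x * I) ^ ((-t : ℝ) : ℂ) =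
      ((2 * Real.pi * Real.Gamma (s + t - 1) /
        (Real.Gamma s * Real.Gamma t * (a + b) ^ (s + t - 1)) : ℝ) : ℂ) := by
  have ht0 : 0 < t := by linarith
  have hpi := Real.pi_pos
  -- Plain decay of `(b + 2πix)^{-t}`: the bound for products, with trivial second factor.
  have hInt : Integrable (𝓕 (gammaKernel t b)) := by
    have h := (integrable_mul_cpow (a := b) (b := 1) (p := -t) (q := 0) hb one_pos (by linarith))
    have h := (h.comp_mul_left' (R := 2 * Real.pi) (by positivity)).const_mul (Real.Gamma t : ℂ)
    refine h.congr (.of_forall fun x ↦ ?_)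
    simp [fourier_gammaKernel ht0 hb]
  have hinv (y : ℝ) (hy : 0 < y) : 𝓕⁻ (𝓕 (gammaKernel t b)) y = gammaKernel t b y := by
    refine (integrable_gammaKernel ht0 hb).fourierInv_fourier_eq hInt ?_
    have : ContinuousAt (fun y : ℝ ↦ ((y ^ (t - 1) * Real.exp (-(b * y)) : ℝ) : ℂ)) y := by
      have := Real.continuousAt_rpow_const y (t - 1) (Or.inl hy.ne')
      fun_prop
    refine this.congr ?_
    filter_upwards [lt_mem_nhds hy] with w hw
    simp [gammaKernel, hw]
  -- `∫ 𝓕f · g = ∫ f · 𝓕g` with `g(x) = 𝓕h(-x)`, for which `𝓕g = 𝓕⁻𝓕h`.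
  have hpars := VectorFourier.integral_fourierIntegral_smul_eq_flip (L := innerₗ ℝ) (μ := volume)
    (ν := volume) (f := gammaKernel s a) (g := fun x ↦ 𝓕 (gammaKernel t b) (-x))
    Real.continuous_fourierChar continuous_inner (integrable_gammaKernel hs ha) hInt.comp_neg
  rw [flip_innerₗ] at hpars
  change ∫ x, 𝓕 (gammaKernel s a) x • 𝓕 (gammaKernel t b) (-x) =
    ∫ y, gammaKernel s a y • 𝓕 (fun x ↦ 𝓕 (gammaKernel t b) (-x)) y at hpars
  rw [← Real.fourierInv_eq_fourier_comp_neg] at hpars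
  have hR : ∫ y, gammaKernel s a y • 𝓕⁻ (𝓕 (gammaKernel t b)) y =
      ((Real.Gamma (s + t - 1) / (a + b) ^ (s + t - 1) : ℝ) : ℂ) := by
    have h := Real.integral_rpow_mul_exp_neg_mul_Ioi (a := s + t - 1) (r := a + b)
      (by linarith) (by linarith)
    rw [one_div, Real.inv_rpow (by positivity), inv_mul_eq_div] at h
    rw [← h, ← integral_complex_ofReal, ← integral_indicator measurableSet_Ioi]
    congr 1 with y
    by_cases hy : y ∈ Ioi (0 : ℝ)
    · have hy' : 0 < y := hy
      rw [hinv y hy, gammaKernel, gammaKernel, indicator_of_mem hy, indicator_of_mem hy,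
        indicator_of_mem hy, smul_eq_mul, ← ofReal_mul]
      congr 1
      rw [mul_mul_mul_comm, ← Real.rpow_add hy', ← Real.exp_add]
      ring_nf
    · simp [gammaKernel, indicator_of_notMem hy]
  rw [hR] at hpars
  let G : ℝ → ℂ := fun x ↦ ((a : ℂ) + x * I) ^ ((-s : ℝ) : ℂ) * ((b : ℂ) - x * I) ^ ((-t : ℝ) : ℂ)
  have hL : ∫ x, 𝓕 (gammaKernel s a) x • 𝓕 (gammaKernel t b) (-x) =
      (Real.Gamma s * Real.Gamma t) * (((2 * Real.pi)⁻¹ : ℝ) * ∫ x, G x) := by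
    have := Measure.integral_comp_mul_left G (2 * Real.pi)
    rw [abs_of_pos (by positivity), real_smul] at this
    rw [← this, ← integral_const_mul]
    congr 1 with x
    rw [fourier_gammaKernel hs ha, fourier_gammaKernel ht0 hb]
    simp only [G, smul_eq_mul]
    rw [mul_neg, ofReal_neg (2 * Real.pi * x), neg_mul, ← sub_eq_add_neg]
    ring
  rw [hL] at hpars
  have hG1 : (Real.Gamma s : ℂ) ≠ 0 := by exact_mod_cast (Real.Gamma_pos_of_pos hs).ne'
  have hG2 : (Real.Gamma t : ℂ) ≠ 0 := by exact_mod_cast (Real.Gamma_pos_of_pos ht0).ne'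
  have hpiC : (Real.pi : ℂ) ≠ 0 := by exact_mod_cast hpi.ne'
  have hab : (((a + b) ^ (s + t - 1) : ℝ) : ℂ) ≠ 0 := by
    exact_mod_cast (Real.rpow_pos_of_pos (by linarith) _).ne'
  change ∫ x, G x = _
  rw [ofReal_div] at hpars ⊢
  rw [ofReal_inv] at hpars
  simp only [ofReal_mul, ofReal_ofNat] at hpars ⊢
  field_simp at hpars ⊢
  linear_combination hpars

/-- Raising the second exponent by one. With `A = a + ix` and `B = b - ix`, the derivative of
`A^{1-s} B^{-t}` is `i ((1-s) A^{-s} B^{-t} + t A^{1-s} B^{-t-1})`; substituting `A = (a + b) - B`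
leaves only the two integrands of the statement. -/
lemma integral_line_step {s t a b : ℝ} (hst : 1 < s + t) (ha : 0 < a) (hb : 0 < b) :
    ((s + t - 1 : ℝ) : ℂ) *
      ∫ x : ℝ, ((a : ℂ) + x * I) ^ ((-s : ℝ) : ℂ) * ((b : ℂ) - x * I) ^ ((-t : ℝ) : ℂ) =
    ((t * (a + b) : ℝ) : ℂ) *
      ∫ x : ℝ, ((a : ℂ) + x * I) ^ ((-s : ℝ) : ℂ) * ((b : ℂ) - x * I) ^ ((-(t + 1) : ℝ) : ℂ) := by
  have hi1 := integrable_mul_cpow ha hb (p := -s) (q := -t) (by linarith)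
  have hi2 := integrable_mul_cpow ha hb (p := -s) (q := -(t + 1)) (by linarith)
  let H : ℝ → ℂ := fun x ↦
    ((a : ℂ) + x * I) ^ ((-s + 1 : ℝ) : ℂ) * ((b : ℂ) - x * I) ^ ((-t : ℝ) : ℂ)
  have hderiv (x : ℝ) : HasDerivAt H
      (I * (((t * (a + b) : ℝ) : ℂ) *
        (((a : ℂ) + x * I) ^ ((-s : ℝ) : ℂ) * ((b : ℂ) - x * I) ^ ((-(t + 1) : ℝ) : ℂ)) -
      ((s + t - 1 : ℝ) : ℂ) *
        (((a : ℂ) + x * I) ^ ((-s : ℝ) : ℂ) * ((b : ℂ) - x * I) ^ ((-t : ℝ) : ℂ)))) x := by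
    have hA : (a : ℂ) + x * I ∈ slitPlane := Or.inl (by simpa using ha)
    have hB : (b : ℂ) - x * I ∈ slitPlane := Or.inl (by simpa using hb)
    have hx : HasDerivAt (fun z : ℂ ↦ z * I) I (x : ℂ) := hasDerivAt_mul_const I
    have h1 := (hx.const_add (a : ℂ)).cpow_const (c := ((-s + 1 : ℝ) : ℂ)) hA
    have h2 := (hx.const_sub (b : ℂ)).cpow_const (c := ((-t : ℝ) : ℂ)) hB
    refine (h1.mul h2).comp_ofReal.congr_deriv ?_
    have e1 : ((a : ℂ) + x * I) ^ ((-s + 1 : ℝ) : ℂ) =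
        ((a : ℂ) + x * I) ^ ((-s : ℝ) : ℂ) * ((a : ℂ) + x * I) := by
      rw [ofReal_add, ofReal_one, cpow_add _ _ (slitPlane_ne_zero hA), cpow_one]
    have e2 : ((b : ℂ) - x * I) ^ ((-t : ℝ) : ℂ) =
        ((b : ℂ) - x * I) ^ ((-(t + 1) : ℝ) : ℂ) * ((b : ℂ) - x * I) := by
      rw [show ((-t : ℝ) : ℂ) = ((-(t + 1) : ℝ) : ℂ) + 1 by push_cast; ring,
        cpow_add _ _ (slitPlane_ne_zero hB), cpow_one]
    have e3 : ((-s + 1 : ℝ) : ℂ) - 1 = ((-s : ℝ) : ℂ) := by push_cast; ring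
    have e4 : ((-t : ℝ) : ℂ) - 1 = ((-(t + 1) : ℝ) : ℂ) := by push_cast; ring
    rw [e3, e4, e1, e2]
    push_cast
    ring
  obtain ⟨C, hC⟩ := exists_norm_mul_cpow_le ha hb (-s + 1) (-t)
  have hdecay : Tendsto (fun y : ℝ ↦ C * (1 + y) ^ (-s + 1 + -t)) atTop (𝓝 0) := by
    have h := (tendsto_rpow_neg_atTop (y := s + t - 1) (by linarith)).comp
      (tendsto_atTop_add_const_left atTop (1 : ℝ) tendsto_id)
    have h := h.const_mul C
    rw [mul_zero] at h
    refine h.congr fun y ↦ ?_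
    simp only [Function.comp, id]
    ring_nf
  have htop : Tendsto H atTop (𝓝 0) :=
    squeeze_zero_norm hC (hdecay.comp tendsto_norm_atTop_atTop)
  have hbot : Tendsto H atBot (𝓝 0) :=
    squeeze_zero_norm hC (hdecay.comp tendsto_abs_atBot_atTop)
  have h0 := integral_of_hasDerivAt_of_tendsto hderiv
    (((hi2.const_mul _).sub (hi1.const_mul _)).const_mul I) hbot htop
  rw [integral_const_mul, integral_sub (hi2.const_mul _) (hi1.const_mul _), integral_const_mul,
    integral_const_mul, sub_zero, mul_eq_zero, sub_eq_zero] at h0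
  exact (h0.resolve_left I_ne_zero).symm

/-- For all `a_j, a_k, ν_j, ν_k > 0`,
`∫_ℝ (a_j + ix)^{−ν_j−1/2} (a_k − ix)^{−ν_k−1/2} dx
  = 2π Γ(ν_j+ν_k) / (Γ(ν_j+1/2) Γ(ν_k+1/2) (a_j+a_k)^{ν_j+ν_k})`,
where complex powers are principal-branch powers. -/
theorem stmt_3 (aj ak νj νk : ℝ) (haj : 0 < aj) (hak : 0 < ak) (hνj : 0 < νj) (hνk : 0 < νk) :
    ∫ x : ℝ, ((aj : ℂ) + x * Complex.I) ^ ((-(νj + 1/2) : ℝ) : ℂ) *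
        ((ak : ℂ) - x * Complex.I) ^ ((-(νk + 1/2) : ℝ) : ℂ) =
      ((2 * Real.pi * Real.Gamma (νj + νk) /
        (Real.Gamma (νj + 1/2) * Real.Gamma (νk + 1/2) * (aj + ak) ^ (νj + νk)) : ℝ) : ℂ) := by
  have hν : 0 < νj + νk := by linarith
  have hs : 0 < νj + 1 / 2 := by linarith
  have ht : 0 < νk + 1 / 2 := by linarith
  have hstep := integral_line_step (s := νj + 1 / 2) (t := νk + 1 / 2) (by linarith) haj hak
  rw [integral_line_of_one_lt hs (t := νk + 1 / 2 + 1) (by linarith) haj hak,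
    show νj + 1 / 2 + (νk + 1 / 2) - 1 = νj + νk by ring,
    show νj + 1 / 2 + (νk + 1 / 2 + 1) - 1 = νj + νk + 1 by ring, ← ofReal_mul] at hstep
  have hne : ((νj + νk : ℝ) : ℂ) ≠ 0 := by exact_mod_cast hν.ne'
  refine mul_left_cancel₀ hne (hstep.trans ?_)
  rw [← ofReal_mul]
  congr 1
  have hG1 := (Real.Gamma_pos_of_pos hs).ne'
  have hG2 := (Real.Gamma_pos_of_pos ht).ne'
  have hab : 0 < aj + ak := by linarith
  have hp := (Real.rpow_pos_of_pos hab (νj + νk)).ne'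
  rw [Real.Gamma_add_one hν.ne', Real.Gamma_add_one ht.ne', Real.rpow_add_one hab.ne']
  generalize Real.Gamma (νj + 1 / 2) = g1 at *
  generalize Real.Gamma (νk + 1 / 2) = g2 at *
  generalize νk + 1 / 2 = t at *
  field_simp
end

section
/- Let a_j, a_k > 0 and h ∈ ℝ, h ≠ 0. Then ∫_ℝ e^{i h x} (a_j + i x)^{−1} (a_k − i x)^{−1} dx = (2π / (a_j + a_k)) · e^{−a_j h} if h > 0, and = (2π / (a_j + a_k)) · e^{a_k h} if h < 0. (Thus when both smoothness parameters equal 1/2, the Matérn cross-covariance with real directional measure is proportional to the density of an asymmetric Laplace distribution.) -/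
open MeasureTheory Complex

/-!
The two-sided exponential `f t = e^{a_k t}` for `t ≤ 0`, `f t = e^{-a_j t}` for `t > 0`, is
continuous and integrable, and integrating over the two half-lines gives its Fourier transform
(`fourier_laplaceKernel`):
`𝓕 f w = (a_k - 2πiw)⁻¹ + (a_j + 2πiw)⁻¹ = (a_j + a_k) (a_j + 2πiw)⁻¹ (a_k - 2πiw)⁻¹`.
This decays like `w⁻²`, hence is integrable (`integrable_inv_mul_inv`), so Fourier inversion
recovers `f h`. The substitution `x = 2πw` turns the inversion integral into the one to be
computed, with value `2π / (a_j + a_k) * f h` for every real `h`.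
-/

open scoped FourierTransform

/-- The unnormalised asymmetric Laplace density, complex-valued so that it can be fed to the
Fourier transform. -/
noncomputable def laplaceKernel (aj ak t : ℝ) : ℂ :=
  if t ≤ 0 then Complex.exp (ak * t) else Complex.exp (-aj * t)

lemma continuous_laplaceKernel (aj ak : ℝ) : Continuous (laplaceKernel aj ak) := by
  unfold laplaceKernel
  refine Continuous.if_le (by fun_prop) (by fun_prop) continuous_id continuous_const ?_
  intro t ht
  simp [ht]

lemma integrable_laplaceKernel {aj ak : ℝ} (haj : 0 < aj) (hak : 0 < ak) :
    Integrable (laplaceKernel aj ak) := by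
  rw [← integrableOn_univ, ← Set.Iic_union_Ioi (a := (0 : ℝ)), integrableOn_union]
  constructor
  · refine (integrableOn_exp_mul_complex_Iic (a := (ak : ℂ)) (by simpa) 0).congr_fun ?_
      measurableSet_Iic
    intro t ht
    simp [laplaceKernel, Set.mem_Iic.1 ht]
  · refine (integrableOn_exp_mul_complex_Ioi (a := (-aj : ℂ)) (by simpa) 0).congr_fun ?_
      measurableSet_Ioi
    intro t ht
    simp [laplaceKernel, not_le.2 (Set.mem_Ioi.1 ht)]

lemma add_mul_I_ne_zero {a : ℝ} (ha : 0 < a) (x : ℝ) : (a : ℂ) + x * I ≠ 0 := by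
  intro h
  have := congrArg Complex.re h
  simp at this
  exact ha.ne' this

lemma sub_mul_I_ne_zero {a : ℝ} (ha : 0 < a) (x : ℝ) : (a : ℂ) - x * I ≠ 0 := by
  simpa [sub_eq_add_neg] using add_mul_I_ne_zero ha (-x)

lemma fourier_laplaceKernel {aj ak : ℝ} (haj : 0 < aj) (hak : 0 < ak) (w : ℝ) :
    𝓕 (laplaceKernel aj ak) w = ((aj : ℂ) + ak) *
      (((aj : ℂ) + (2 * Real.pi * w : ℝ) * I)⁻¹ * ((ak : ℂ) - (2 * Real.pi * w : ℝ) * I)⁻¹) := by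
  have h1 : Set.EqOn (fun t : ℝ => Complex.exp (((ak : ℂ) - (2 * Real.pi * w : ℝ) * I) * t))
      (fun t : ℝ => Complex.exp (↑(-2 * Real.pi * t * w) * I) • laplaceKernel aj ak t)
      (Set.Iic 0) := by
    intro t ht
    simp only [laplaceKernel, if_pos (Set.mem_Iic.1 ht), smul_eq_mul, ← Complex.exp_add]
    congr 1
    push_cast
    ring
  have h2 : Set.EqOn (fun t : ℝ => Complex.exp ((-((aj : ℂ) + (2 * Real.pi * w : ℝ) * I)) * t))
      (fun t : ℝ => Complex.exp (↑(-2 * Real.pi * t * w) * I) • laplaceKernel aj ak t)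
      (Set.Ioi 0) := by
    intro t ht
    simp only [laplaceKernel, if_neg (not_le.2 (Set.mem_Ioi.1 ht)), smul_eq_mul,
      ← Complex.exp_add]
    congr 1
    push_cast
    ring
  have r1 : 0 < ((ak : ℂ) - (2 * Real.pi * w : ℝ) * I).re := by simpa using hak
  have r2 : (-((aj : ℂ) + (2 * Real.pi * w : ℝ) * I)).re < 0 := by simpa using haj
  rw [Real.fourier_real_eq_integral_exp_smul,
    ← intervalIntegral.integral_Iic_add_Ioi (b := (0 : ℝ))
      ((integrableOn_exp_mul_complex_Iic r1 0).congr_fun h1 measurableSet_Iic)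
      ((integrableOn_exp_mul_complex_Ioi r2 0).congr_fun h2 measurableSet_Ioi),
    ← setIntegral_congr_fun measurableSet_Iic h1, ← setIntegral_congr_fun measurableSet_Ioi h2,
    integral_exp_mul_complex_Iic r1, integral_exp_mul_complex_Ioi r2]
  have n1 := sub_mul_I_ne_zero hak (2 * Real.pi * w)
  have n2 := add_mul_I_ne_zero haj (2 * Real.pi * w)
  generalize hz : ((2 * Real.pi * w : ℝ) : ℂ) * I = z at *
  simp only [ofReal_zero, mul_zero, Complex.exp_zero, neg_div_neg_eq]
  field_simp
  ring

lemma mul_sqrt_le_norm {m a : ℝ} (hm : 0 < m) (hm1 : m ≤ 1) (hma : m ≤ a) (x : ℝ) :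
    m * √(1 + x ^ 2) ≤ ‖(a : ℂ) + x * I‖ := by
  rw [Complex.norm_add_mul_I]
  apply Real.le_sqrt_of_sq_le
  rw [mul_pow, Real.sq_sqrt (by positivity)]
  have h1 : m ^ 2 ≤ a ^ 2 := by gcongr
  have h2 : m ^ 2 ≤ 1 := pow_le_one₀ hm.le hm1
  nlinarith [sq_nonneg x]

lemma integrable_inv_mul_inv {aj ak : ℝ} (haj : 0 < aj) (hak : 0 < ak) :
    Integrable (fun x : ℝ => ((aj : ℂ) + x * I)⁻¹ * ((ak : ℂ) - x * I)⁻¹) := by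
  obtain ⟨m, hm, hm1, hmj, hmk⟩ : ∃ m : ℝ, 0 < m ∧ m ≤ 1 ∧ m ≤ aj ∧ m ≤ ak :=
    ⟨min 1 (min aj ak), by positivity, by simp, by simp, by simp⟩
  refine (integrable_inv_one_add_sq.const_mul ((m ^ 2)⁻¹)).mono' ?_ ?_
  · apply Continuous.aestronglyMeasurable
    exact (Continuous.inv₀ (by fun_prop) (add_mul_I_ne_zero haj)).mul
      (Continuous.inv₀ (by fun_prop) (sub_mul_I_ne_zero hak))
  · refine Filter.Eventually.of_forall fun x => ?_
    have h1 := mul_sqrt_le_norm hm hm1 hmj x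
    have h2 := mul_sqrt_le_norm hm hm1 hmk (-x)
    rw [neg_sq, ofReal_neg, neg_mul, ← sub_eq_add_neg] at h2
    rw [norm_mul, norm_inv, norm_inv, ← mul_inv, ← mul_inv]
    apply inv_anti₀ (by positivity)
    calc m ^ 2 * (1 + x ^ 2) = (m * √(1 + x ^ 2)) * (m * √(1 + x ^ 2)) := by
          rw [mul_mul_mul_comm, Real.mul_self_sqrt (by positivity), sq m]
      _ ≤ _ := by gcongr

/-- The cross-covariance integral, for every real `h` including `0`. -/
lemma integral_eq_laplaceKernel {aj ak : ℝ} (haj : 0 < aj) (hak : 0 < ak) (h : ℝ) :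
    ∫ x : ℝ, Complex.exp (Complex.I * ((h * x : ℝ) : ℂ)) *
        ((aj : ℂ) + x * Complex.I)⁻¹ * ((ak : ℂ) - x * Complex.I)⁻¹ =
      2 * Real.pi / (aj + ak) * laplaceKernel aj ak h := by
  have hF : Integrable (𝓕 (laplaceKernel aj ak)) := by
    rw [funext (fourier_laplaceKernel haj hak)]
    exact ((integrable_inv_mul_inv haj hak).comp_mul_left'
      (mul_ne_zero two_ne_zero Real.pi_ne_zero)).const_mul _
  have hinv := congrFun ((continuous_laplaceKernel aj ak).fourierInv_fourier_eq
    (integrable_laplaceKernel haj hak) hF) h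
  have hsum : (aj : ℂ) + ak ≠ 0 := by exact_mod_cast (add_pos haj hak).ne'
  have hpi : (Real.pi : ℂ) ≠ 0 := by exact_mod_cast Real.pi_ne_zero
  have hsub := Measure.integral_comp_mul_left
    (fun x : ℝ => Complex.exp (Complex.I * ((h * x : ℝ) : ℂ)) *
        ((aj : ℂ) + x * Complex.I)⁻¹ * ((ak : ℂ) - x * Complex.I)⁻¹) (2 * Real.pi)
  rw [Real.fourierInv_eq'] at hinv
  have hpt : ∀ w : ℝ, Complex.exp (↑(2 * Real.pi * inner ℝ w h) * I) •
      𝓕 (laplaceKernel aj ak) w = ((aj : ℂ) + ak) *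
      (Complex.exp (Complex.I * ((h * (2 * Real.pi * w) : ℝ) : ℂ)) *
        ((aj : ℂ) + (2 * Real.pi * w : ℝ) * Complex.I)⁻¹ *
        ((ak : ℂ) - (2 * Real.pi * w : ℝ) * Complex.I)⁻¹) := by
    intro w
    have : (↑(2 * Real.pi * inner ℝ w h) * I : ℂ) = I * ((h * (2 * Real.pi * w) : ℝ) : ℂ) := by
      simp
      ring
    rw [fourier_laplaceKernel haj hak, this, smul_eq_mul]
    ring
  simp_rw [hpt] at hinv
  rw [integral_const_mul, hsub, abs_of_pos (by positivity)] at hinv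
  rw [← hinv, Complex.real_smul]
  push_cast
  field_simp



/-- For `a_j, a_k > 0` and `h ≠ 0`,
`∫_ℝ e^{ihx} (a_j + ix)^{−1} (a_k − ix)^{−1} dx` equals `(2π/(a_j+a_k)) e^{−a_j h}` for `h > 0`
and `(2π/(a_j+a_k)) e^{a_k h}` for `h < 0`. -/
theorem stmt_4 (aj ak h : ℝ) (haj : 0 < aj) (hak : 0 < ak) (hh : h ≠ 0) :
    (0 < h → ∫ x : ℝ, Complex.exp (Complex.I * ((h * x : ℝ) : ℂ)) *
        ((aj : ℂ) + x * Complex.I)⁻¹ * ((ak : ℂ) - x * Complex.I)⁻¹ =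
      ((2 * Real.pi / (aj + ak) * Real.exp (-aj * h) : ℝ) : ℂ)) ∧
    (h < 0 → ∫ x : ℝ, Complex.exp (Complex.I * ((h * x : ℝ) : ℂ)) *
        ((aj : ℂ) + x * Complex.I)⁻¹ * ((ak : ℂ) - x * Complex.I)⁻¹ =
      ((2 * Real.pi / (aj + ak) * Real.exp (ak * h) : ℝ) : ℂ)) := by
  constructor
  · intro hpos
    rw [integral_eq_laplaceKernel haj hak, laplaceKernel, if_neg (not_le.2 hpos)]
    push_cast
    rfl
  · intro hneg
    rw [integral_eq_laplaceKernel haj hak, laplaceKernel, if_pos hneg.le]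
    push_cast
    rfl
end

section
/- Let a_j, a_k > 0, ν_j > 0, and h < 0. Then ∫_ℝ e^{i h x} (a_j + i x)^{−ν_j − 1/2} (a_k − i x)^{−1} dx = 2π (a_j + a_k)^{−ν_j − 1/2} e^{a_k h}. (Thus when one marginal covariance is exponential, i.e., ν_k = 1/2, the Matérn cross-covariance with real directional measure is proportional to an exponential covariance on the half-line h < 0.) -/
/-!
Put `w = i x` and `G(w) = e^{h w} (a_j + w)^{-ν_j-1/2}`. Since `h < 0`, the function `G` is holomorphic
on the closed right half-plane and decays there like a negative power of `‖w‖`. The theorem is the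
Cauchy formula `∫ G(ix) / (a - ix) dx = 2π G(a)` for the half-plane
(`integral_div_sub_mul_I`), at `a = a_k`.

To prove that formula, subtract from `G(w)` the function `2a G(a) / (a + w)`, which has the same value
at `w = a`. The difference divided by `w - a` has a removable singularity at `a` and decays
faster than `1 / ‖w‖`, so its integral along the imaginary axis vanishes by Cauchy's theorem on the
rectangles `[0, R] × [-R, R]` (`integral_imaginary_axis_eq_zero`). The part subtracted contributes
the Cauchy density integral `∫ 2a / (a² + x²) dx = 2π`.
-/

open MeasureTheory Complex

open Filter Topology

lemma continuous_comp_mul_I {H : ℂ → ℂ} (hd : DifferentiableOn ℂ H {w | 0 ≤ w.re}) :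
    Continuous fun x : ℝ => H (x * I) := by
  refine hd.continuousOn.comp_continuous (by fun_prop) fun x => ?_
  simp

lemma integrable_of_decay {H : ℂ → ℂ} {C R₀ q : ℝ} (hq : 0 < q)
    (hd : DifferentiableOn ℂ H {w | 0 ≤ w.re})
    (hb : ∀ w : ℂ, 0 ≤ w.re → R₀ ≤ ‖w‖ → ‖H w‖ ≤ C * ‖w‖ ^ (-(1 + q))) :
    Integrable fun x : ℝ => H (x * I) := by
  have hg : Integrable (fun x : ℝ => (1 + ‖x‖) ^ (-(1 + q))) :=
    integrable_one_add_norm (by simpa using hq)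
  have key : ∀ x : ℝ, max R₀ 1 ≤ |x| →
      ‖H (x * I)‖ ≤ (|C| * 2 ^ (1 + q)) * ‖(1 + ‖x‖) ^ (-(1 + q))‖ := by
    intro x hx
    have hx1 : 1 ≤ |x| := (le_max_right _ _).trans hx
    have h1 := hb (x * I) (by simp) (by simpa using (le_max_left _ _).trans hx)
    have hn : ‖(x : ℂ) * I‖ = |x| := by simp
    rw [hn] at h1
    have h2 : |x| ^ (-(1 + q)) ≤ ((1 + |x|) / 2) ^ (-(1 + q)) :=
      Real.rpow_le_rpow_of_nonpos (by positivity) (by linarith) (by linarith)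
    have h3 : ((1 + |x|) / 2) ^ (-(1 + q)) = 2 ^ (1 + q) * (1 + |x|) ^ (-(1 + q)) := by
      rw [Real.div_rpow (by positivity) (by positivity), Real.rpow_neg (by positivity : (0:ℝ) ≤ 2),
        div_inv_eq_mul, mul_comm]
    have h4 : ‖(1 + ‖x‖) ^ (-(1 + q))‖ = (1 + |x|) ^ (-(1 + q)) := by
      rw [Real.norm_of_nonneg (by positivity), Real.norm_eq_abs]
    rw [h4, mul_assoc, ← h3]
    calc _ ≤ _ := h1
      _ ≤ |C| * |x| ^ (-(1 + q)) := by gcongr; exact le_abs_self C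
      _ ≤ _ := by gcongr
  refine (continuous_comp_mul_I hd).locallyIntegrable.integrable_of_isBigO_atBot_atTop
    (g := fun x : ℝ => (1 + ‖x‖) ^ (-(1 + q))) (g' := fun x : ℝ => (1 + ‖x‖) ^ (-(1 + q)))
    (.of_bound (|C| * 2 ^ (1 + q)) ?_) (hg.integrableAtFilter _)
    (.of_bound (|C| * 2 ^ (1 + q)) ?_) (hg.integrableAtFilter _)
  · filter_upwards [tendsto_abs_atBot_atTop.eventually_ge_atTop (max R₀ 1)] with x hx
    exact key x hx
  · filter_upwards [tendsto_abs_atTop_atTop.eventually_ge_atTop (max R₀ 1)] with x hx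
    exact key x hx

/-- The contributions of the other three sides of `[0, R] × [-R, R]` are `O(R ^ (-q))`. -/
lemma integral_imaginary_axis_eq_zero {H : ℂ → ℂ} {C R₀ q : ℝ} (hq : 0 < q)
    (hd : DifferentiableOn ℂ H {w | 0 ≤ w.re})
    (hb : ∀ w : ℂ, 0 ≤ w.re → R₀ ≤ ‖w‖ → ‖H w‖ ≤ C * ‖w‖ ^ (-(1 + q))) :
    ∫ x : ℝ, H (x * I) = 0 := by
  have hint := integrable_of_decay hq hd hb
  have hlim := intervalIntegral_tendsto_integral hint tendsto_neg_atTop_atBot tendsto_id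
  refine tendsto_nhds_unique hlim ?_
  have hz : Tendsto (fun R : ℝ => (4 * |C|) * R ^ (-q)) atTop (𝓝 0) := by
    simpa using (tendsto_rpow_neg_atTop hq).const_mul (4 * |C|)
  refine squeeze_zero_norm' ?_ hz
  filter_upwards [eventually_ge_atTop (max R₀ 1)] with R hR
  have hR1 : 1 ≤ R := (le_max_right _ _).trans hR
  have hR0 : R₀ ≤ R := (le_max_left _ _).trans hR
  have hbd : ∀ w : ℂ, 0 ≤ w.re → R ≤ ‖w‖ → ‖H w‖ ≤ |C| * R ^ (-(1 + q)) := by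
    intro w hw hwR
    calc _ ≤ _ := hb w hw (hR0.trans hwR)
      _ ≤ |C| * ‖w‖ ^ (-(1 + q)) := by gcongr; exact le_abs_self C
      _ ≤ _ := mul_le_mul_of_nonneg_left
        (Real.rpow_le_rpow_of_nonpos (by positivity) hwR (by linarith)) (abs_nonneg C)
  have hrect := integral_boundary_rect_eq_zero_of_differentiableOn H (⟨0, -R⟩ : ℂ) (⟨R, R⟩ : ℂ)
    (hd.mono (by
      intro w hw
      have := hw.1
      simp only [Set.mem_preimage, Set.uIcc_of_le (by linarith : (0:ℝ) ≤ R)] at this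
      exact this.1))
  simp only [ofReal_zero, zero_add] at hrect
  have e1 : ‖∫ x in (0:ℝ)..R, H (x + (-R : ℝ) * I)‖ ≤ |C| * R ^ (-(1 + q)) * |R - 0| := by
    refine intervalIntegral.norm_integral_le_of_norm_le_const fun x hx => hbd _ ?_ ?_
    · rw [Set.uIoc_of_le (by linarith)] at hx
      simpa using hx.1.le
    · refine le_trans ?_ (abs_im_le_norm _)
      simp [le_abs_self]
  have e2 : ‖∫ x in (0:ℝ)..R, H (x + (R : ℝ) * I)‖ ≤ |C| * R ^ (-(1 + q)) * |R - 0| := by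
    refine intervalIntegral.norm_integral_le_of_norm_le_const fun x hx => hbd _ ?_ ?_
    · rw [Set.uIoc_of_le (by linarith)] at hx
      simpa using hx.1.le
    · refine le_trans ?_ (abs_im_le_norm _)
      simp [le_abs_self]
  have e3 : ‖∫ y in (-R)..R, H ((R : ℝ) + y * I)‖ ≤ |C| * R ^ (-(1 + q)) * |R - -R| := by
    refine intervalIntegral.norm_integral_le_of_norm_le_const fun x hx => hbd _ ?_ ?_
    · simp; linarith
    · refine le_trans ?_ (abs_re_le_norm _)
      simp [le_abs_self]
  have hRq : R ^ (-(1 + q)) * R = R ^ (-q) := by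
    rw [← Real.rpow_add_one (by positivity)]; congr 1; ring
  have a1 : |R - 0| = R := by rw [sub_zero, abs_of_nonneg (by linarith)]
  have a2 : |R - -R| = 2 * R := by rw [abs_of_nonneg (by linarith)]; ring
  rw [a1] at e1 e2
  rw [a2] at e3
  have hfin : ‖∫ y in (-R)..R, H (y * I)‖ = ‖I • ∫ y in (-R)..R, H (y * I)‖ := by
    rw [norm_smul]; simp
  simp only [id]
  rw [hfin, ← sub_eq_zero.mp hrect]
  refine (norm_add_le _ _).trans ?_
  refine (add_le_add (norm_sub_le _ _) (by rw [norm_smul, norm_I, one_mul])).trans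
    ((add_le_add (add_le_add e1 e2) e3).trans (le_of_eq ?_))
  rw [← hRq]; ring

lemma integral_two_mul_div_sq_add_sq {a : ℝ} (ha : 0 < a) :
    Integrable (fun x : ℝ => 2 * a / (a ^ 2 + x ^ 2)) ∧
      ∫ x : ℝ, 2 * a / (a ^ 2 + x ^ 2) = 2 * Real.pi := by
  have he : (fun x : ℝ => 2 * a / (a ^ 2 + x ^ 2)) =
      fun x : ℝ => (2 / a) * (1 + (x / a) ^ 2)⁻¹ := by
    funext x
    have : a ^ 2 + x ^ 2 ≠ 0 := by positivity
    field_simp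
  rw [he]
  refine ⟨(integrable_inv_one_add_sq.comp_div ha.ne').const_mul _, ?_⟩
  rw [integral_const_mul, Measure.integral_comp_div (fun y : ℝ => (1 + y ^ 2)⁻¹),
    integral_univ_inv_one_add_sq, abs_of_pos ha, smul_eq_mul]
  field_simp

/-- Cauchy's formula for the right half-plane, as an integral over the imaginary axis. -/
lemma integral_div_sub_mul_I {G : ℂ → ℂ} {a q : ℝ} (ha : 0 < a) (hq : 0 < q)
    (hd : DifferentiableOn ℂ G {w | 0 ≤ w.re})
    (hb : ∀ w : ℂ, 0 ≤ w.re → 1 ≤ ‖w‖ → ‖G w‖ ≤ ‖w‖ ^ (-q)) :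
    ∫ x : ℝ, G (x * I) * ((a : ℂ) - x * I)⁻¹ = 2 * Real.pi * G a := by
  have ha' : (a : ℂ) ≠ 0 := by exact_mod_cast ha.ne'
  have hne : ∀ w : ℂ, 0 ≤ w.re → (a : ℂ) + w ≠ 0 := by
    intro w hw h0
    have := congrArg re h0
    simp at this
    linarith
  set N : ℂ → ℂ := fun w => G w - 2 * a * G a / (a + w) with hN
  have hNa : N a = 0 := by
    simp only [hN]
    field_simp
    ring
  have hNd : DifferentiableOn ℂ N {w | 0 ≤ w.re} :=
    hd.sub ((differentiableOn_const _).div (by fun_prop) fun w hw => hne w hw)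
  have hnhds : {w : ℂ | 0 ≤ w.re} ∈ 𝓝 (a : ℂ) :=
    mem_of_superset ((isOpen_lt continuous_const continuous_re).mem_nhds
      (by simpa using ha : (0:ℝ) < (a : ℂ).re)) fun w (hw : 0 < w.re) => hw.le
  have hHd := (differentiableOn_dslope hnhds).mpr hNd
  have hH : ∀ w : ℂ, w ≠ a → dslope N a w = N w / (w - a) := by
    intro w hw
    rw [dslope_of_ne _ hw, slope_def_field, hNa, sub_zero]
  -- The exponent `min q 1` accounts for both summands of `N`.
  have hq' : 0 < min q 1 := lt_min hq one_pos
  have hHb : ∀ w : ℂ, 0 ≤ w.re → max 1 (2 * a) ≤ ‖w‖ →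
      ‖dslope N a w‖ ≤ (2 * (1 + 2 * a * ‖G a‖)) * ‖w‖ ^ (-(1 + min q 1)) := by
    intro w hw hwR
    have h1 : 1 ≤ ‖w‖ := (le_max_left _ _).trans hwR
    have h2 : 2 * a ≤ ‖w‖ := (le_max_right _ _).trans hwR
    have hna : ‖(a : ℂ)‖ = a := by simp [abs_of_pos ha]
    have hsub : ‖w‖ / 2 ≤ ‖w - a‖ := by
      have := norm_sub_norm_le w (a : ℂ)
      rw [hna] at this
      linarith
    have hadd : ‖w‖ ≤ ‖(a : ℂ) + w‖ := by
      rw [norm_def, norm_def]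
      apply Real.sqrt_le_sqrt
      simp only [normSq_apply, add_re, add_im, ofReal_re, ofReal_im, zero_add]
      nlinarith
    have hwa : w ≠ a := by
      rintro rfl
      rw [hna] at h2
      linarith
    have b1 : ‖G w‖ ≤ ‖w‖ ^ (-min q 1) := (hb w hw h1).trans
      (Real.rpow_le_rpow_of_exponent_le h1 (by simp))
    have b2 : ‖2 * a * G a / (a + w)‖ ≤ 2 * a * ‖G a‖ * ‖w‖ ^ (-min q 1) := by
      rw [norm_div, norm_mul, norm_mul, hna, norm_ofNat, div_eq_mul_inv]
      gcongr
      calc ‖(a : ℂ) + w‖⁻¹ ≤ ‖w‖⁻¹ := by gcongr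
        _ = ‖w‖ ^ (-1 : ℝ) := (Real.rpow_neg_one _).symm
        _ ≤ _ := Real.rpow_le_rpow_of_exponent_le h1 (by simp)
    have b3 : ‖N w‖ ≤ (1 + 2 * a * ‖G a‖) * ‖w‖ ^ (-min q 1) := by
      refine (norm_sub_le _ _).trans ((add_le_add b1 b2).trans (le_of_eq (by ring)))
    have hw0 : 0 < ‖w‖ := by linarith
    rw [hH w hwa, norm_div]
    calc ‖N w‖ / ‖w - a‖ ≤ ((1 + 2 * a * ‖G a‖) * ‖w‖ ^ (-min q 1)) / (‖w‖ / 2) := by gcongr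
      _ = _ := by
        have : ‖w‖ ^ (-(1 + min q 1)) = ‖w‖ ^ (-min q 1) / ‖w‖ := by
          rw [← Real.rpow_sub_one hw0.ne']; congr 1; ring
        rw [this]; field_simp
  have hI := integrable_of_decay hq' hHd hHb
  have h0 := integral_imaginary_axis_eq_zero hq' hHd hHb
  obtain ⟨pI, pV⟩ := integral_two_mul_div_sq_add_sq ha
  have hsplit : ∀ x : ℝ, G (x * I) * ((a : ℂ) - x * I)⁻¹ =
      ((2 * a / (a ^ 2 + x ^ 2) : ℝ) : ℂ) * G a - dslope N a (x * I) := by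
    intro x
    have hxa : (x : ℂ) * I ≠ a := by
      intro h
      have := congrArg re h
      simp at this
      linarith
    have n1 : (a : ℂ) - x * I ≠ 0 := sub_ne_zero.mpr hxa.symm
    have n2 : (a : ℂ) + x * I ≠ 0 := hne _ (by simp)
    have n3 : (x : ℂ) * I - a ≠ 0 := sub_ne_zero.mpr hxa
    have n4 : (a : ℂ) ^ 2 + x ^ 2 = (a + x * I) * (a - x * I) := by
      ring_nf; simp
    rw [hH _ hxa]
    simp only [hN]
    push_cast
    rw [n4, ← neg_sub (a : ℂ) (x * I)]
    field_simp
    ring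
  simp_rw [hsplit]
  have pI' : Integrable (fun x : ℝ => ((2 * a / (a ^ 2 + x ^ 2) : ℝ) : ℂ) * G a) :=
    Integrable.mul_const pI.ofReal _
  rw [integral_sub pI' hI, h0, sub_zero, integral_mul_const,
    integral_complex_ofReal, pV]
  push_cast
  ring

/-- For `a_j, a_k > 0`, `ν_j > 0` and `h < 0`,
`∫_ℝ e^{ihx} (a_j + ix)^{−ν_j−1/2} (a_k − ix)^{−1} dx = 2π (a_j+a_k)^{−ν_j−1/2} e^{a_k h}`. -/
theorem stmt_5 (aj ak νj h : ℝ) (haj : 0 < aj) (hak : 0 < ak) (hνj : 0 < νj) (hh : h < 0) :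
    ∫ x : ℝ, Complex.exp (Complex.I * ((h * x : ℝ) : ℂ)) *
        ((aj : ℂ) + x * Complex.I) ^ ((-(νj + 1/2) : ℝ) : ℂ) *
        ((ak : ℂ) - x * Complex.I)⁻¹ =
      ((2 * Real.pi * (aj + ak) ^ (-(νj + 1/2)) * Real.exp (ak * h) : ℝ) : ℂ) := by
  set s : ℝ := νj + 1 / 2 with hs
  have hs0 : 0 < s := by positivity
  have hslit : ∀ w : ℂ, 0 ≤ w.re → (aj : ℂ) + w ∈ slitPlane := by
    intro w hw
    left
    simp
    linarith
  have hd : DifferentiableOn ℂ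
      (fun w : ℂ => exp (h * w) * ((aj : ℂ) + w) ^ ((-s : ℝ) : ℂ)) {w | 0 ≤ w.re} := by
    refine DifferentiableOn.mul (by fun_prop) ?_
    exact DifferentiableOn.cpow (by fun_prop) (by fun_prop) fun w hw => hslit w hw
  have key := integral_div_sub_mul_I hak hs0 hd (by
    intro w hw h1
    have hadd : ‖w‖ ≤ ‖(aj : ℂ) + w‖ := by
      rw [norm_def, norm_def]
      apply Real.sqrt_le_sqrt
      simp only [normSq_apply, add_re, add_im, ofReal_re, ofReal_im, zero_add]
      nlinarith
    rw [norm_mul, norm_cpow_real, norm_exp]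
    have he : Real.exp ((h : ℂ) * w).re ≤ 1 := by
      rw [Real.exp_le_one_iff]
      simpa using mul_nonpos_of_nonpos_of_nonneg hh.le hw
    calc _ ≤ 1 * ‖(aj : ℂ) + w‖ ^ (-s) := by gcongr
      _ = ‖(aj : ℂ) + w‖ ^ (-s) := one_mul _
      _ ≤ _ := Real.rpow_le_rpow_of_nonpos (by linarith) hadd (by linarith))
  have hL : ∀ x : ℝ, I * ((h * x : ℝ) : ℂ) = h * (x * I) := by
    intro x
    push_cast
    ring
  simp_rw [hL]
  rw [key]
  push_cast [Complex.ofReal_cpow (by positivity : 0 ≤ aj + ak)]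
  rw [mul_comm (h : ℂ) ak]
  ring
end

section
/- Let a_j, a_k > 0, ν > 0, and h ∈ ℝ, h ≠ 0. Write a_+ := (a_j + a_k)/2 and a_− := (a_j − a_k)/2. Then ∫_ℝ e^{i h x} (a_j + i x)^{−ν − 1/2} (a_k − i x)^{−ν − 1/2} dx = (2√π / Γ(ν + 1/2)) · (|h| / (2 a_+))^{ν} · e^{−h a_−} · K_ν(a_+ |h|). (Thus when ν_j = ν_k = ν, the Matérn cross-covariance with real directional measure is proportional to the probability density of a variance-gamma / Bessel-function distribution.) -/
/-!
Since the arguments of `a_j + ix` and `a_k - ix` both lie in `(-π/2, π/2)`, the two powers combine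
into `p(x) ^ (-s)` with `s = ν + 1/2` and
`p(x) = (a_j + ix)(a_k - ix) = a_j a_k + x² + ix(a_k - a_j)`. The real part of `p(x)` is positive,
so Euler's integral `Γ(s) p ^ (-s) = ∫_0^∞ t^(s-1) e^(-pt) dt` holds for the complex parameter `p`
(`integral_rpow_mul_cexp`, by analytic continuation from positive real `p`).

The resulting double integral converges absolutely, exactly because `ν > 0`
(`integrable_gamma_integrand`). After swapping the order, the `x`-integral is Gaussian
(`gaussian_slice`): completing the square turns `a_j a_k` into `a₊²` and produces the factor
`e^(-h a₋)`. What is left is `∫_0^∞ t^(ν-1) exp(-a₊² t - h²/(4t)) dt`, which the substitution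
`t = |h|/(2a₊) · e^u` identifies with `2 (|h|/(2a₊))^ν K_ν(a₊|h|)` (`integral_bessel`).
-/

open MeasureTheory Complex

/-- The modified Bessel function of the second kind, via its integral representation
`K_ν(z) = ∫_0^∞ e^{−z cosh t} cosh(ν t) dt`. -/
noncomputable def besselK (ν z : ℝ) : ℝ :=
  ∫ t in Set.Ioi (0 : ℝ), Real.exp (-z * Real.cosh t) * Real.cosh (ν * t)

lemma integrableOn_rpow_exp {s b : ℝ} (hs : 0 < s) (hb : 0 < b) :
    IntegrableOn (fun t : ℝ => t ^ (s - 1) * Real.exp (-(b * t))) (Set.Ioi 0) := by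
  have := integrableOn_rpow_mul_exp_neg_mul_rpow (p := 1) (s := s - 1) (b := b) (by linarith)
    one_pos hb
  simpa using this

/-- Euler's integral for the Gamma function with a complex rate `r` in the right half-plane. As a
function of `-r` the left side is the complex moment generating function of the measure
`t^(s-1) dt` on `(0, ∞)`, hence analytic; the right side is analytic too, and both agree for real
`r > 0`. -/
lemma integral_rpow_mul_cexp {s : ℝ} (hs : 0 < s) {r : ℂ} (hr : 0 < r.re) :
    ∫ t in Set.Ioi (0 : ℝ), ((t ^ (s - 1) : ℝ) : ℂ) * cexp (-(r * t)) =
      r ^ (-(s : ℂ)) * Complex.Gamma s := by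
  set μ : Measure ℝ := (volume.restrict (Set.Ioi (0 : ℝ))).withDensity
    (fun t => ENNReal.ofReal (t ^ (s - 1))) with hμ
  have hmeas : Measurable fun t : ℝ => t ^ (s - 1) := by fun_prop
  have hmgf (z : ℂ) : ProbabilityTheory.complexMGF id μ z =
      ∫ t in Set.Ioi (0 : ℝ), ((t ^ (s - 1) : ℝ) : ℂ) * cexp (z * t) := by
    rw [ProbabilityTheory.complexMGF, hμ, integral_withDensity_eq_integral_toReal_smul (by fun_prop)
      (by simp)]
    refine setIntegral_congr_fun measurableSet_Ioi fun t (ht : 0 < t) => ?_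
    simp only [ENNReal.toReal_ofReal (Real.rpow_nonneg ht.le _), id, real_smul]
  have hexp : Set.Iio 0 ⊆ interior (ProbabilityTheory.integrableExpSet id μ) := by
    refine interior_maximal (fun b (hb : b < 0) => ?_) isOpen_Iio
    change Integrable _ _
    rw [hμ, integrable_withDensity_iff_integrable_smul' (by fun_prop) (by simp)]
    refine (integrableOn_rpow_exp hs (neg_pos.2 hb)).congr_fun (fun t (ht : 0 < t) => ?_)
      measurableSet_Ioi
    simp [ENNReal.toReal_ofReal (Real.rpow_nonneg ht.le _)]
  have hU : IsPreconnected {z : ℂ | z.re < 0} := (convex_halfSpace_re_lt 0).isPreconnected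
  have hf : AnalyticOnNhd ℂ (ProbabilityTheory.complexMGF id μ) {z : ℂ | z.re < 0} :=
    ProbabilityTheory.analyticOnNhd_complexMGF.mono fun z hz => hexp hz
  have hg : AnalyticOnNhd ℂ (fun z : ℂ => (-z) ^ (-(s : ℂ)) * Complex.Gamma s)
      {z : ℂ | z.re < 0} := by
    intro z (hz : z.re < 0)
    refine AnalyticAt.mul (AnalyticAt.cpow (by fun_prop) (by fun_prop) ?_) (by fun_prop)
    exact Or.inl (by simpa using hz)
  have hreal (b : ℝ) (hb : b < 0) : ProbabilityTheory.complexMGF id μ b =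
      (-b : ℂ) ^ (-(s : ℂ)) * Complex.Gamma s := by
    have h1 := Complex.integral_cpow_mul_exp_neg_mul_Ioi (a := s) (r := -b) (by simpa) (by linarith)
    rw [hmgf, cpow_neg, ← inv_cpow]
    · rw [ofReal_neg, one_div] at h1
      rw [← h1]
      refine setIntegral_congr_fun measurableSet_Ioi fun t (ht : 0 < t) => ?_
      simp [ofReal_cpow ht.le]
    · rw [← ofReal_neg, arg_ofReal_of_nonneg (by linarith)]
      exact Real.pi_pos.ne
  have hfreq : ∃ᶠ z in nhdsWithin (-1 : ℂ) {-1}ᶜ, ProbabilityTheory.complexMGF id μ z =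
      (-z) ^ (-(s : ℂ)) * Complex.Gamma s := by
    have ht : Filter.Tendsto (fun x : ℝ => (x : ℂ)) (nhdsWithin (-1) {-1}ᶜ)
        (nhdsWithin (-1 : ℂ) {-1}ᶜ) := by
      refine tendsto_nhdsWithin_iff.2 ⟨?_, ?_⟩
      · have : ContinuousAt (fun x : ℝ => (x : ℂ)) (-1) := by fun_prop
        simpa [ContinuousAt] using this.mono_left nhdsWithin_le_nhds
      · filter_upwards [self_mem_nhdsWithin] with x hx h
        simp only [Set.mem_singleton_iff] at h
        exact hx (by exact_mod_cast h)
    refine ht.frequently (Filter.Eventually.frequently ?_)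
    filter_upwards [nhdsWithin_le_nhds (Iio_mem_nhds (show (-1 : ℝ) < 0 by norm_num))] with b hb
    exact hreal b hb
  have key := hf.eqOn_of_preconnected_of_frequently_eq hg hU (z₀ := -1) (by simp) hfreq
    (show -r ∈ {z : ℂ | z.re < 0} by simpa using hr)
  simpa [hmgf] using key

lemma integrableOn_bessel (a h ν : ℝ) (ha : 0 < a) (hν : 0 < ν) :
    IntegrableOn (fun t : ℝ => t ^ (ν - 1) * Real.exp (-(a ^ 2 * t) - h ^ 2 / (4 * t)))
      (Set.Ioi 0) := by
  refine (integrableOn_rpow_exp hν (pow_pos ha 2)).mono' ?_ ?_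
  · exact Measurable.aestronglyMeasurable (by fun_prop)
  · filter_upwards [ae_restrict_mem measurableSet_Ioi] with t (ht : 0 < t)
    rw [Real.norm_of_nonneg (by positivity)]
    gcongr
    have : 0 ≤ h ^ 2 / (4 * t) := by positivity
    linarith

/-- The Sommerfeld-type representation of `K_ν`, obtained from the defining one by the substitution
`t = |h|/(2a) · e^u` and symmetrisation in `u`. -/
lemma integral_bessel (a h ν : ℝ) (ha : 0 < a) (hν : 0 < ν) (hh : h ≠ 0) :
    ∫ t in Set.Ioi (0 : ℝ), t ^ (ν - 1) * Real.exp (-(a ^ 2 * t) - h ^ 2 / (4 * t)) =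
      2 * (|h| / (2 * a)) ^ ν * besselK ν (a * |h|) := by
  have hh' : 0 < |h| := abs_pos.2 hh
  set c := |h| / (2 * a) with hc
  have hc0 : 0 < c := by positivity
  have himg : (fun u : ℝ => c * Real.exp u) '' Set.univ = Set.Ioi 0 := by
    ext t
    simp only [Set.image_univ, Set.mem_range, Set.mem_Ioi]
    refine ⟨?_, fun ht => ⟨Real.log (t / c), ?_⟩⟩
    · rintro ⟨u, rfl⟩; positivity
    · rw [Real.exp_log (by positivity)]; field_simp
  have hder : ∀ u ∈ Set.univ, HasDerivWithinAt (fun u : ℝ => c * Real.exp u) (c * Real.exp u)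
      Set.univ u := fun u _ => ((Real.hasDerivAt_exp u).const_mul c).hasDerivWithinAt
  have hinj : Set.InjOn (fun u : ℝ => c * Real.exp u) Set.univ := fun u _ v _ huv =>
    Real.exp_injective (mul_left_cancel₀ hc0.ne' huv)
  have hpt (u : ℝ) : |c * Real.exp u| • ((c * Real.exp u) ^ (ν - 1) *
      Real.exp (-(a ^ 2 * (c * Real.exp u)) - h ^ 2 / (4 * (c * Real.exp u)))) =
      c ^ ν * (Real.exp (-(a * |h|) * Real.cosh u) * Real.exp (ν * u)) := by
    have hu := Real.exp_pos u
    rw [abs_of_pos (by positivity), smul_eq_mul, ← mul_assoc,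
      ← Real.rpow_one_add' (by positivity) (by linarith), add_sub_cancel,
      Real.mul_rpow hc0.le hu.le, ← Real.exp_mul, mul_comm u ν]
    have : -(a ^ 2 * (c * Real.exp u)) - h ^ 2 / (4 * (c * Real.exp u)) =
        -(a * |h|) * Real.cosh u := by
      rw [Real.cosh_eq, Real.exp_neg, hc, ← sq_abs h]
      field_simp
      ring
    rw [this]; ring
  have hI := integrableOn_bessel a h ν ha hν
  rw [← himg,
    integrableOn_image_iff_integrableOn_abs_deriv_smul MeasurableSet.univ hder hinj] at hI
  simp only [hpt, integrableOn_univ] at hI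
  rw [integrable_const_mul_iff (by exact (Real.rpow_pos_of_pos hc0 ν).ne'.isUnit)] at hI
  rw [← himg, integral_image_eq_integral_abs_deriv_smul MeasurableSet.univ hder hinj]
  simp only [hpt, setIntegral_univ, integral_const_mul]
  -- Averaging the integrand with its reflection `u ↦ -u` replaces `e^(νu)` by `cosh (νu)`.
  have hneg := integral_neg_eq_self
    (fun u : ℝ => Real.exp (-(a * |h|) * Real.cosh u) * Real.exp (ν * u)) volume
  have hsum := integral_add hI hI.comp_neg
  rw [hneg, ← two_mul] at hsum
  have heven : ∫ u : ℝ, (Real.exp (-(a * |h|) * Real.cosh u) * Real.exp (ν * u) +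
      Real.exp (-(a * |h|) * Real.cosh (-u)) * Real.exp (ν * (-u))) =
      2 * ∫ u : ℝ, Real.exp (-(a * |h|) * Real.cosh |u|) * Real.cosh (ν * |u|) := by
    rw [← integral_const_mul]
    congr 1 with u
    have : Real.cosh (ν * |u|) = Real.cosh (ν * u) := by
      rw [← Real.cosh_abs (ν * |u|), abs_mul, abs_abs, ← abs_mul, Real.cosh_abs]
    rw [this, Real.cosh_abs, Real.cosh_neg, Real.cosh_eq (ν * u), mul_neg]
    ring
  rw [heven, integral_comp_abs
    (f := fun u => Real.exp (-(a * |h|) * Real.cosh u) * Real.cosh (ν * u))] at hsum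
  rw [besselK]
  linear_combination (-c ^ ν / 2) * hsum

lemma cpow_mul_cpow (aj ak s x : ℝ) (haj : 0 < aj) (hak : 0 < ak) :
    ((aj : ℂ) + x * I) ^ (s : ℂ) * ((ak : ℂ) - x * I) ^ (s : ℂ) =
      (((aj : ℂ) + x * I) * ((ak : ℂ) - x * I)) ^ (s : ℂ) := by
  have h1 : ((aj : ℂ) + x * I) ≠ 0 := fun h => haj.ne' (by simpa using congrArg re h)
  have h2 : ((ak : ℂ) - x * I) ≠ 0 := fun h => hak.ne' (by simpa using congrArg re h)
  have a1 : |((aj : ℂ) + x * I).arg| < Real.pi / 2 :=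
    abs_arg_lt_pi_div_two_iff.2 (Or.inl (by simpa))
  have a2 : |((ak : ℂ) - x * I).arg| < Real.pi / 2 :=
    abs_arg_lt_pi_div_two_iff.2 (Or.inl (by simpa))
  rw [abs_lt] at a1 a2
  rw [cpow_def_of_ne_zero h1, cpow_def_of_ne_zero h2, cpow_def_of_ne_zero (mul_ne_zero h1 h2),
    ← Complex.exp_add, Complex.log_mul h1 h2 (by constructor <;> linarith [a1.1, a1.2, a2.1, a2.2])]
  ring_nf

/-- The inner integral over `x` after the order of integration is exchanged. -/
lemma gaussian_slice (aj ak h t : ℝ) (ht : 0 < t) :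
    ∫ x : ℝ, cexp (I * ((h * x : ℝ) : ℂ)) *
        cexp (-((((aj : ℂ) + x * I) * ((ak : ℂ) - x * I)) * t)) =
      ((Real.sqrt Real.pi * t ^ (-(1/2) : ℝ) * Real.exp (-h * ((aj - ak) / 2)) *
        Real.exp (-(((aj + ak) / 2) ^ 2 * t) - h ^ 2 / (4 * t)) : ℝ) : ℂ) := by
  have ht' : (t : ℂ) ≠ 0 := by exact_mod_cast ht.ne'
  have h1 := integral_cexp_quadratic (b := -(t : ℂ)) (by simpa using ht)
    (I * (h - t * (ak - aj))) (-(aj * ak * t))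
  rw [mul_assoc (_ * _), ← Real.exp_add]
  calc _ = ∫ x : ℝ, cexp (-(t : ℂ) * x ^ 2 + I * (h - t * (ak - aj)) * x + -(aj * ak * t)) := by
        congr 1 with x
        rw [← Complex.exp_add]
        congr 1
        push_cast
        linear_combination (t * x ^ 2 : ℂ) * I_sq
    _ = _ := by
        rw [h1, neg_neg]
        have e1 : ((Real.pi : ℂ) / t) ^ (1 / 2 : ℂ) =
            ((Real.sqrt Real.pi * t ^ (-(1/2) : ℝ) : ℝ) : ℂ) := by
          rw [Real.sqrt_eq_rpow, Real.rpow_neg ht.le, ← div_eq_mul_inv,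
            ← Real.div_rpow Real.pi_pos.le ht.le, ofReal_cpow (by positivity)]
          push_cast; rfl
        rw [e1, ofReal_mul _ (Real.exp _), ofReal_exp]
        congr 2
        push_cast
        field_simp
        linear_combination (4 * (h - t * (ak - aj)) ^ 2 : ℂ) * I_sq

/-- Absolute convergence of the double integral in `(x, t)`: the modulus of the integrand is
`t^(ν-1/2) e^(-a_j a_k t) e^(-t x²)`, whose integral over `x` is `√π t^(ν-1) e^(-a_j a_k t)`. -/
lemma integrable_gamma_integrand (aj ak h ν : ℝ) (haj : 0 < aj) (hak : 0 < ak) (hν : 0 < ν) :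
    Integrable (fun p : ℝ × ℝ => ((p.2 ^ (ν + 1/2 - 1) : ℝ) : ℂ) *
      (cexp (I * ((h * p.1 : ℝ) : ℂ)) *
        cexp (-((((aj : ℂ) + p.1 * I) * ((ak : ℂ) - p.1 * I)) * p.2))))
      (volume.prod (volume.restrict (Set.Ioi 0))) := by
  have hm : Measurable (fun p : ℝ × ℝ => ((p.2 ^ (ν + 1/2 - 1) : ℝ) : ℂ) *
      (cexp (I * ((h * p.1 : ℝ) : ℂ)) *
        cexp (-((((aj : ℂ) + p.1 * I) * ((ak : ℂ) - p.1 * I)) * p.2)))) := by fun_prop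
  have hn (x t : ℝ) (ht : 0 < t) : ‖((t ^ (ν + 1/2 - 1) : ℝ) : ℂ) *
      (cexp (I * ((h * x : ℝ) : ℂ)) *
        cexp (-((((aj : ℂ) + x * I) * ((ak : ℂ) - x * I)) * t)))‖ =
      t ^ (ν + 1/2 - 1) * Real.exp (-(aj * ak * t)) * Real.exp (-t * x ^ 2) := by
    rw [norm_mul, norm_mul, mul_comm I, norm_exp_ofReal_mul_I, norm_real,
      Real.norm_of_nonneg (by positivity), Complex.norm_exp, one_mul,
      mul_assoc (t ^ _), ← Real.exp_add]
    congr 2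
    simp
    ring
  rw [integrable_prod_iff' hm.aestronglyMeasurable]
  constructor
  · filter_upwards [ae_restrict_mem measurableSet_Ioi] with t (ht : 0 < t)
    refine Integrable.mono' (g := fun x => t ^ (ν + 1/2 - 1) * Real.exp (-(aj * ak * t)) *
      Real.exp (-t * x ^ 2)) ((integrable_exp_neg_mul_sq ht).const_mul _)
      (Measurable.aestronglyMeasurable (by fun_prop)) (.of_forall fun x => (hn x t ht).le)
  · refine Integrable.congr (f := fun t => Real.sqrt Real.pi *
      (t ^ (ν - 1) * Real.exp (-((aj * ak) * t)))) ((integrableOn_rpow_exp hν (mul_pos haj hak)).const_mul _) ?_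
    filter_upwards [ae_restrict_mem measurableSet_Ioi] with t (ht : 0 < t)
    simp only [hn _ t ht, integral_const_mul, integral_gaussian]
    rw [Real.sqrt_div Real.pi_pos.le, show ν + 1/2 - 1 = (ν - 1) + 1/2 by ring,
      Real.rpow_add ht, ← Real.sqrt_eq_rpow]
    have := Real.sqrt_pos.2 ht
    field_simp

/-- For `a_j, a_k > 0`, `ν > 0` and `h ≠ 0`, with `a₊ = (a_j+a_k)/2` and
`a₋ = (a_j−a_k)/2`,
`∫_ℝ e^{ihx} (a_j + ix)^{−ν−1/2} (a_k − ix)^{−ν−1/2} dx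
   = (2√π / Γ(ν+1/2)) (|h|/(2a₊))^ν e^{−h a₋} K_ν(a₊|h|)`. -/
theorem stmt_7 (aj ak ν h : ℝ) (haj : 0 < aj) (hak : 0 < ak) (hν : 0 < ν) (hh : h ≠ 0) :
    ∫ x : ℝ, Complex.exp (Complex.I * ((h * x : ℝ) : ℂ)) *
        ((aj : ℂ) + x * Complex.I) ^ ((-(ν + 1/2) : ℝ) : ℂ) *
        ((ak : ℂ) - x * Complex.I) ^ ((-(ν + 1/2) : ℝ) : ℂ) =
      ((2 * Real.sqrt Real.pi / Real.Gamma (ν + 1/2) *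
          (|h| / (2 * ((aj + ak) / 2))) ^ ν * Real.exp (-h * ((aj - ak) / 2)) *
          besselK ν (((aj + ak) / 2) * |h|) : ℝ) : ℂ) := by
  have hs : 0 < ν + 1/2 := by linarith
  have hG : Real.Gamma (ν + 1/2) ≠ 0 := (Real.Gamma_pos_of_pos hs).ne'
  have hG' : (Real.Gamma (ν + 1/2) : ℂ) ≠ 0 := by exact_mod_cast hG
  have hswap := integral_integral_swap (f := fun x t : ℝ => ((t ^ (ν + 1/2 - 1) : ℝ) : ℂ) *
      (cexp (I * ((h * x : ℝ) : ℂ)) *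
        cexp (-((((aj : ℂ) + x * I) * ((ak : ℂ) - x * I)) * t))))
    (integrable_gamma_integrand aj ak h ν haj hak hν)
  have hL (x : ℝ) : ∫ t in Set.Ioi (0 : ℝ), ((t ^ (ν + 1/2 - 1) : ℝ) : ℂ) *
      (cexp (I * ((h * x : ℝ) : ℂ)) *
        cexp (-((((aj : ℂ) + x * I) * ((ak : ℂ) - x * I)) * t))) =
      (cexp (I * ((h * x : ℝ) : ℂ)) *
        ((aj : ℂ) + x * I) ^ ((-(ν + 1/2) : ℝ) : ℂ) *
        ((ak : ℂ) - x * I) ^ ((-(ν + 1/2) : ℝ) : ℂ)) * (Real.Gamma (ν + 1/2) : ℂ) := by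
    have hre : 0 < (((aj : ℂ) + x * I) * ((ak : ℂ) - x * I)).re := by
      simp
      nlinarith [mul_pos haj hak, mul_self_nonneg x]
    simp only [mul_left_comm _ (cexp (I * ((h * x : ℝ) : ℂ)))]
    rw [integral_const_mul, integral_rpow_mul_cexp hs hre, mul_assoc (cexp _),
      cpow_mul_cpow _ _ _ _ haj hak, Gamma_ofReal, ofReal_neg, mul_assoc]
  have hR : ∫ t in Set.Ioi (0 : ℝ), ∫ x : ℝ, ((t ^ (ν + 1/2 - 1) : ℝ) : ℂ) *
      (cexp (I * ((h * x : ℝ) : ℂ)) *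
        cexp (-((((aj : ℂ) + x * I) * ((ak : ℂ) - x * I)) * t))) =
      ((Real.sqrt Real.pi * Real.exp (-h * ((aj - ak) / 2)) *
        (2 * (|h| / (2 * ((aj + ak) / 2))) ^ ν * besselK ν ((aj + ak) / 2 * |h|)) : ℝ) : ℂ) := by
    rw [← integral_bessel _ h ν (by positivity) hν hh, ← integral_const_mul, ← integral_complex_ofReal]
    refine setIntegral_congr_fun measurableSet_Ioi fun t (ht : 0 < t) => ?_
    simp only [integral_const_mul]
    rw [gaussian_slice _ _ _ _ ht, ← ofReal_mul]
    congr 1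
    rw [show ν - 1 = (ν + 1/2 - 1) + (-(1/2)) by ring, Real.rpow_add ht]
    ring
  simp only [hL] at hswap
  rw [hR, integral_mul_const] at hswap
  rw [← mul_left_inj' hG', hswap, ← ofReal_mul]
  congr 1
  field_simp
end

section
/- Let a > 0, h > 0, and ν > 0 with 2ν not an integer. Then ∫_0^∞ sin(h x) (a² + x²)^{−ν − 1/2} dx = (√π / 2) · Γ(1/2 − ν) · (h / (2a))^{ν} · ( I_ν(a h) − L_{−ν}(a h) ). Consequently, the Matérn cross-covariance with purely imaginary directional measure and equal parameters ν_j = ν_k = ν, a_j = a_k = a is, up to the normalizing constants, an odd function proportional to sign(h) (a|h|)^ν (L_{−ν}(a|h|) − I_ν(a|h|)). -/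
/-!
Scaling reduces the claim to `a = 1`. Put `s = ν + 1/2` and
`G_μ(w) = ∫₀^∞ t^(μ-1) exp(-t - w/t) dt`, a Macdonald function up to a power of `w`. Writing
`(1+x²)^(-s)` as a Gamma integral of Gaussians and using that the half-line sine transform of
`exp(-t x²)` is Dawson's function `(z/2t) ∫₀¹ exp(-z²(1-u²)/4t) du`, Fubini gives
(`sine_transform_eq`)

  `Γ(s) ∫₀^∞ sin(zx) (1+x²)^(-s) dx = (z/2) ∫₀¹ G_{ν-1/2}(z²(1-u²)/4) du`.

For noninteger `μ` one has `G_μ(w) = Γ(μ) Γ(1-μ) (Φ_{-μ}(w) - w^μ Φ_μ(w))` with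
`Φ_c(w) = Σ w^m / (m! Γ(m+1+c))` (`macG_eq`). For `0 < μ < 1`, the relations `G_μ' = -G_{μ-1}` and
`G_{-μ}(w) = w^(-μ) G_μ(w)` hold for both sides, so the differences of the two sides at the orders
`μ` and `1-μ` solve a singular linear system and tend to `0` at the origin; an energy estimate
(`system_unique`) forces them to vanish. The remaining orders follow by differentiation and
reflection.

Since `2ν` is not an integer, this applies to `μ = ν - 1/2`. Integrating termwise over `u` with
Beta integrals (`phiS_average`), the `Φ_{-μ}` part becomes the series of `L_{-ν}` and the
`w^μ Φ_μ` part that of `I_ν`.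
-/

open MeasureTheory

/-- The modified Bessel function of the first kind `I_ν`, via its power series
`I_ν(z) = Σ_{m≥0} (z/2)^{ν+2m} / (Γ(m+1) Γ(ν+m+1))`. -/
noncomputable def besselI (ν z : ℝ) : ℝ :=
  ∑' m : ℕ, (z / 2) ^ (ν + 2 * (m : ℝ)) / (Real.Gamma ((m : ℝ) + 1) * Real.Gamma (ν + m + 1))

/-- The modified Struve function of the first kind of order `−ν`, via its power series
`L_{−ν}(z) = Σ_{m≥0} (z/2)^{2m−ν+1} / (Γ(m+3/2) Γ(m−ν+3/2))`. -/
noncomputable def struveLneg (ν z : ℝ) : ℝ :=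
  ∑' m : ℕ, (z / 2) ^ (2 * (m : ℝ) - ν + 1) /
    (Real.Gamma ((m : ℝ) + 3/2) * Real.Gamma ((m : ℝ) - ν + 3/2))

open Filter Topology Set

/-! ### The Macdonald integral -/

/-- The integral `∫₀^∞ t^(μ-1) exp(-t - w/t) dt`, which for `w > 0` equals
`2 w^(μ/2) K_μ(2√w)` with `K_μ` the Macdonald function. -/
noncomputable def macG (μ w : ℝ) : ℝ :=
  ∫ t in Ioi (0 : ℝ), t ^ (μ - 1) * Real.exp (-t - w / t)

lemma macG_continuousOn (μ w : ℝ) :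
    ContinuousOn (fun t : ℝ => t ^ (μ - 1) * Real.exp (-t - w / t)) (Ioi 0) := by
  refine ContinuousOn.mul ?_ ?_
  · exact continuousOn_id.rpow_const (fun x hx => Or.inl (ne_of_gt hx))
  · refine Real.continuous_exp.comp_continuousOn ?_
    refine continuousOn_id.neg.sub (continuousOn_const.div continuousOn_id ?_)
    exact fun x hx => ne_of_gt hx

lemma macG_aesm (μ w : ℝ) : AEStronglyMeasurable
    (fun t : ℝ => t ^ (μ - 1) * Real.exp (-t - w / t)) (volume.restrict (Ioi 0)) :=
  (macG_continuousOn μ w).aestronglyMeasurable measurableSet_Ioi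

lemma gamma_integrable {s : ℝ} (hs : 0 < s) :
    IntegrableOn (fun t : ℝ => t ^ (s - 1) * Real.exp (-t)) (Ioi 0) := by
  simpa [mul_comm] using Real.GammaIntegral_convergent hs

lemma macG_integrable (μ : ℝ) {w : ℝ} (hw : 0 < w) :
    IntegrableOn (fun t : ℝ => t ^ (μ - 1) * Real.exp (-t - w / t)) (Ioi 0) := by
  obtain ⟨k, hk⟩ := exists_nat_gt (-μ)
  have hi := (gamma_integrable (s := μ + k) (by linarith)).const_mul (k.factorial / w ^ k : ℝ)
  refine Integrable.mono' hi (macG_aesm μ w) ?_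
  refine (ae_restrict_iff' measurableSet_Ioi).2 (Eventually.of_forall fun t ht => ?_)
  have ht : 0 < t := ht
  rw [Real.norm_of_nonneg (by positivity)]
  have h1 : Real.exp (-(w / t)) ≤ k.factorial / w ^ k * t ^ k := by
    have := Real.pow_div_factorial_le_exp (x := w / t) (by positivity) k
    rw [Real.exp_neg, inv_le_comm₀ (Real.exp_pos _) (by positivity)]
    refine le_trans (le_of_eq ?_) this
    rw [div_pow]
    field_simp
  have h2 : t ^ (μ + k - 1) = t ^ (μ - 1) * t ^ k := by
    rw [← Real.rpow_natCast t k, ← Real.rpow_add ht]; ring_nf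
  rw [h2, sub_eq_add_neg (-t), Real.exp_add]
  calc t ^ (μ - 1) * (Real.exp (-t) * Real.exp (-(w / t)))
      ≤ t ^ (μ - 1) * (Real.exp (-t) * (k.factorial / w ^ k * t ^ k)) := by gcongr
    _ = _ := by ring

lemma macG_hasDerivAt (μ : ℝ) {w : ℝ} (hw : 0 < w) :
    HasDerivAt (macG μ) (-macG (μ - 1) w) w := by
  have key := hasDerivAt_integral_of_dominated_loc_of_deriv_le
    (μ := volume.restrict (Ioi (0 : ℝ))) (x₀ := w) (s := Ioi (w / 2))
    (F := fun w t => t ^ (μ - 1) * Real.exp (-t - w / t))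
    (F' := fun w t => -(t ^ (μ - 1 - 1) * Real.exp (-t - w / t)))
    (bound := fun t => t ^ (μ - 1 - 1) * Real.exp (-t - (w / 2) / t))
    (Ioi_mem_nhds (by linarith)) (Eventually.of_forall fun v => macG_aesm μ v)
    (macG_integrable μ hw) (macG_aesm (μ - 1) w).neg ?_ (macG_integrable (μ - 1) (by linarith)) ?_
  · convert! key.2 using 1
    rw [integral_neg, macG]
  · refine (ae_restrict_iff' measurableSet_Ioi).2 (Eventually.of_forall fun t ht v hv => ?_)
    have ht : 0 < t := ht
    have hv : w / 2 < v := hv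
    rw [norm_neg, Real.norm_of_nonneg (by positivity)]
    gcongr
  · refine (ae_restrict_iff' measurableSet_Ioi).2 (Eventually.of_forall fun t ht v hv => ?_)
    have ht : 0 < t := ht
    have h1 : HasDerivAt (fun v : ℝ => -t - v / t) (-(1 / t)) v := by
      simpa using ((hasDerivAt_id v).div_const t).const_sub (-t)
    convert! (h1.exp.const_mul (t ^ (μ - 1))) using 1
    rw [Real.rpow_sub_one ht.ne' (μ - 1)]
    field_simp

/-- The reflection `t ↦ w/t`. -/
lemma macG_neg (μ : ℝ) {w : ℝ} (hw : 0 < w) : macG (-μ) w = w ^ (-μ) * macG μ w := by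
  have h1 := integral_comp_rpow_Ioi
    (fun t : ℝ => t ^ (-μ - 1) * Real.exp (-t - w / t)) (p := -1) (by norm_num)
  have h2 := integral_comp_mul_left_Ioi'
    (fun t : ℝ => (|(-1 : ℝ)| * t ^ ((-1 : ℝ) - 1)) •
      ((t ^ (-1 : ℝ)) ^ (-μ - 1) * Real.exp (-t ^ (-1 : ℝ) - w / t ^ (-1 : ℝ)))) 0
      (b := w⁻¹) (by positivity)
  rw [mul_zero, h1] at h2
  rw [macG, ← h2, macG, smul_eq_mul, ← integral_const_mul, ← integral_const_mul]
  refine setIntegral_congr_fun measurableSet_Ioi fun t ht => ?_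
  have ht : 0 < t := ht
  have hi : (w⁻¹ * t) ^ (-1 : ℝ) = w / t := by
    rw [Real.rpow_neg_one]; field_simp
  have e1 : (w⁻¹ * t) ^ ((-1 : ℝ) - 1) = w ^ (2 : ℝ) * t ^ (-2 : ℝ) := by
    rw [Real.mul_rpow (by positivity) ht.le, Real.inv_rpow hw.le, ← Real.rpow_neg hw.le]
    norm_num
  have e2 : (w / t) ^ (-μ - 1) = w ^ (-μ - 1) * t ^ (μ + 1) := by
    rw [div_eq_mul_inv, Real.mul_rpow hw.le (by positivity), Real.inv_rpow ht.le,
      ← Real.rpow_neg ht.le]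
    ring_nf
  simp only [smul_eq_mul]
  rw [hi, e1, e2]
  have e3 : -(w / t) - w / (w / t) = -t - w / t := by field_simp; ring
  rw [e3]
  have e4 : t ^ (μ - 1) = t ^ (-2 : ℝ) * t ^ (μ + 1) := by
    rw [← Real.rpow_add ht]; ring_nf
  have e5 : w ^ (-μ) = w⁻¹ * (w ^ (2 : ℝ) * w ^ (-μ - 1)) := by
    rw [← Real.rpow_neg_one, ← Real.rpow_add hw, ← Real.rpow_add hw]; ring_nf
  rw [e4, e5]
  norm_num
  ring

lemma macG_tendsto {μ : ℝ} (hμ : 0 < μ) :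
    Tendsto (macG μ) (𝓝[>] 0) (𝓝 (Real.Gamma μ)) := by
  have hG : Real.Gamma μ = ∫ t in Ioi (0 : ℝ), t ^ (μ - 1) * Real.exp (-t) := by
    rw [Real.Gamma_eq_integral hμ]; simp_rw [mul_comm]
  rw [hG]
  refine tendsto_integral_filter_of_dominated_convergence
    (fun t => t ^ (μ - 1) * Real.exp (-t)) (Eventually.of_forall fun v => macG_aesm μ v) ?_
    (gamma_integrable hμ) ?_
  · filter_upwards [self_mem_nhdsWithin] with v hv
    refine (ae_restrict_iff' measurableSet_Ioi).2 (Eventually.of_forall fun t ht => ?_)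
    have ht : 0 < t := ht
    have hv : 0 < v := hv
    rw [Real.norm_of_nonneg (by positivity)]
    gcongr
    have : 0 < v / t := by positivity
    linarith
  · refine (ae_restrict_iff' measurableSet_Ioi).2 (Eventually.of_forall fun t ht => ?_)
    have : Continuous fun v : ℝ => t ^ (μ - 1) * Real.exp (-t - v / t) := by fun_prop
    simpa using (this.tendsto 0).mono_left nhdsWithin_le_nhds

/-! ### The entire series `Φ_c` -/

/-- The entire series `Σ w^m / (m! Γ(m+1+c))`, so that `I_c(2√w) = w^(c/2) Φ_c(w)`. -/
noncomputable def phiS (c w : ℝ) : ℝ :=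
  ∑' m : ℕ, w ^ m / (m.factorial * Real.Gamma (m + 1 + c))

lemma gamma_ne {c : ℝ} (hc : ∀ n : ℤ, c ≠ n) (k : ℤ) : Real.Gamma (k + c) ≠ 0 := by
  apply Real.Gamma_ne_zero
  intro m h
  exact hc (-m - k) (by push_cast; linarith)

lemma phiS_gamma_ne {c : ℝ} (hc : ∀ n : ℤ, c ≠ n) (m : ℕ) : Real.Gamma (m + 1 + c) ≠ 0 := by
  simpa using gamma_ne hc (m + 1)

lemma phiS_gamma_succ {c : ℝ} (hc : ∀ n : ℤ, c ≠ n) (m : ℕ) :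
    Real.Gamma (m + 1 + 1 + c) = (m + 1 + c) * Real.Gamma (m + 1 + c) := by
  rw [← Real.Gamma_add_one]
  · ring_nf
  · intro h
    exact hc (-m - 1) (by push_cast; linarith)

lemma phiS_summable {c : ℝ} (hc : ∀ n : ℤ, c ≠ n) (w : ℝ) :
    Summable fun m : ℕ => w ^ m / (m.factorial * Real.Gamma (m + 1 + c)) := by
  rcases eq_or_ne w 0 with rfl | hw
  · refine summable_of_ne_finset_zero (s := {0}) fun m hm => ?_
    have : m ≠ 0 := by simpa using hm
    simp [this]
  refine summable_of_ratio_test_tendsto_lt_one (l := 0) one_pos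
    (Eventually.of_forall fun m => ?_) ?_
  · have := phiS_gamma_ne hc m
    positivity
  · have h1 : Tendsto (fun m : ℕ => |w| * (((m : ℝ) + 1)⁻¹ * |(m + 1 + c : ℝ)|⁻¹)) atTop
        (𝓝 (|w| * (0 * 0))) := by
      refine Tendsto.const_mul _ (Tendsto.mul ?_ ?_)
      · exact tendsto_inv_atTop_zero.comp
          (tendsto_atTop_add_const_right _ _ tendsto_natCast_atTop_atTop)
      · exact tendsto_inv_atTop_zero.comp (tendsto_abs_atTop_atTop.comp
          (tendsto_atTop_add_const_right _ _
            (tendsto_atTop_add_const_right _ _ tendsto_natCast_atTop_atTop)))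
    rw [mul_zero, mul_zero] at h1
    refine h1.congr fun m => ?_
    have h2 := phiS_gamma_ne hc m
    have h3 : (m + 1 + c : ℝ) ≠ 0 := fun h => hc (-m - 1) (by push_cast; linarith)
    push_cast
    rw [phiS_gamma_succ hc, Nat.factorial_succ]
    push_cast
    simp only [norm_div, norm_mul, norm_pow, Real.norm_eq_abs, Nat.abs_cast]
    rw [abs_of_pos (by positivity : (0 : ℝ) < m + 1), pow_succ]
    field_simp

lemma phiS_zero (c : ℝ) : phiS c 0 = 1 / Real.Gamma (1 + c) := by
  rw [phiS, tsum_eq_single 0]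
  · simp
  · intro m hm; simp [hm]

lemma not_int_add {c : ℝ} (hc : ∀ n : ℤ, c ≠ n) (k : ℤ) : ∀ n : ℤ, c + k ≠ n := by
  intro n h
  exact hc (n - k) (by push_cast; linarith)

lemma not_int_neg {c : ℝ} (hc : ∀ n : ℤ, c ≠ n) : ∀ n : ℤ, -c ≠ n := by
  intro n h
  exact hc (-n) (by push_cast; linarith)

lemma phiS_deriv_hasSum {c : ℝ} (hc : ∀ n : ℤ, c ≠ n) (v : ℝ) : HasSum
    (fun m : ℕ => (m : ℝ) * v ^ (m - 1) / (m.factorial * Real.Gamma (m + 1 + c)))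
    (phiS (c + 1) v) := by
  have hc1 : ∀ n : ℤ, c + 1 ≠ n := by simpa using not_int_add hc 1
  rw [← hasSum_nat_add_iff' 1]
  simp only [Finset.range_one, Finset.sum_singleton, Nat.cast_zero, zero_mul, zero_div, sub_zero]
  refine (phiS_summable hc1 v).hasSum.congr_fun fun m => ?_
  rw [Nat.factorial_succ, Nat.add_sub_cancel]
  push_cast
  rw [show (m : ℝ) + 1 + 1 + c = m + 1 + (c + 1) by ring]
  have := phiS_gamma_ne hc1 m
  field_simp

lemma phiS_hasDerivAt {c : ℝ} (hc : ∀ n : ℤ, c ≠ n) (w : ℝ) :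
    HasDerivAt (phiS c) (phiS (c + 1) w) w := by
  have hu : Summable
      (fun m : ℕ => ‖(m : ℝ) * (|w| + 1) ^ (m - 1) / (m.factorial * Real.Gamma (m + 1 + c))‖) :=
    (phiS_deriv_hasSum hc (|w| + 1)).summable.norm
  rw [← (phiS_deriv_hasSum hc w).tsum_eq]
  have hball : w ∈ Metric.ball (0 : ℝ) (|w| + 1) := by simp
  refine hasDerivAt_tsum_of_isPreconnected
    (g := fun (m : ℕ) (y : ℝ) => y ^ m / (m.factorial * Real.Gamma (m + 1 + c)))
    (g' := fun (m : ℕ) (y : ℝ) => (m : ℝ) * y ^ (m - 1) / (m.factorial * Real.Gamma (m + 1 + c)))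
    hu (t := Metric.ball 0 (|w| + 1)) Metric.isOpen_ball
    (convex_ball _ _).isPreconnected (fun m y _ => ?_) (fun m y hy => ?_)
    hball (phiS_summable hc w) hball
  · exact (hasDerivAt_pow m y).div_const (m.factorial * Real.Gamma (m + 1 + c))
  · have hy : |y| < |w| + 1 := by simpa using hy
    simp only [norm_div, norm_mul, norm_pow, Real.norm_eq_abs]
    rw [abs_of_pos (by positivity : 0 < |w| + 1)]
    gcongr

lemma phiS_rec {c : ℝ} (hc : ∀ n : ℤ, c ≠ n) (w : ℝ) :
    c * phiS c w + w * phiS (c + 1) w = phiS (c - 1) w := by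
  have hc1 : ∀ n : ℤ, c + 1 ≠ n := by simpa using not_int_add hc 1
  have hcm : ∀ n : ℤ, c - 1 ≠ n := by simpa [sub_eq_add_neg] using not_int_add hc (-1)
  have h1 : HasSum (fun m : ℕ => (m : ℝ) * w ^ m / (m.factorial * Real.Gamma (m + 1 + c)))
      (w * phiS (c + 1) w) := by
    rw [← hasSum_nat_add_iff' 1]
    simp only [Finset.range_one, Finset.sum_singleton, Nat.cast_zero, zero_mul, zero_div, sub_zero]
    convert! (phiS_summable hc1 w).hasSum.mul_left w using 1
    funext m
    rw [Nat.factorial_succ, pow_succ]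
    push_cast
    rw [show (m : ℝ) + 1 + 1 + c = m + 1 + (c + 1) by ring]
    have := phiS_gamma_ne hc1 m
    field_simp
  have h2 := ((phiS_summable hc w).hasSum.mul_left c).add h1
  refine h2.unique ?_
  convert! (phiS_summable hcm w).hasSum using 1
  funext m
  have e : Real.Gamma (m + 1 + c) = (m + c) * Real.Gamma (m + 1 + (c - 1)) := by
    rw [show (m : ℝ) + 1 + (c - 1) = m + c by ring, ← Real.Gamma_add_one]
    · ring_nf
    · intro h
      exact hc (-m) (by push_cast; linarith)
  have h3 := phiS_gamma_ne hcm m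
  have h4 : (m + c : ℝ) ≠ 0 := fun h => hc (-m) (by push_cast; linarith)
  rw [e]
  field_simp
  ring

/-! ### Series expansion of the Macdonald integral -/

/-- The candidate series expression `Γ(μ) Γ(1-μ) (Φ_{-μ}(w) - w^μ Φ_μ(w))` for `macG μ w`. -/
noncomputable def macR (μ w : ℝ) : ℝ :=
  Real.Gamma μ * Real.Gamma (1 - μ) * (phiS (-μ) w - w ^ μ * phiS μ w)

lemma macR_hasDerivAt {μ : ℝ} (hμ : ∀ n : ℤ, μ ≠ n) {w : ℝ} (hw : 0 < w) :
    HasDerivAt (macR μ) (-macR (μ - 1) w) w := by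
  have h1 := phiS_hasDerivAt (not_int_neg hμ) w
  have h2 := (Real.hasDerivAt_rpow_const (x := w) (p := μ) (Or.inl hw.ne')).mul
    (phiS_hasDerivAt hμ w)
  refine ((h1.sub h2).const_mul (Real.Gamma μ * Real.Gamma (1 - μ))).congr_deriv ?_
  have hm1 : μ - 1 ≠ 0 := fun h => hμ 1 (by push_cast; linarith)
  have e1 : Real.Gamma μ = (μ - 1) * Real.Gamma (μ - 1) := by
    rw [← Real.Gamma_add_one hm1]; ring_nf
  have e2 : Real.Gamma (1 - (μ - 1)) = (1 - μ) * Real.Gamma (1 - μ) := by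
    rw [← Real.Gamma_add_one (by intro h; apply hm1; linarith)]; ring_nf
  rw [macR, e1, e2, ← phiS_rec hμ w, show -(μ - 1) = -μ + 1 by ring]
  have e3 : w ^ μ = w ^ (μ - 1) * w := by
    rw [Real.rpow_sub_one hw.ne']; field_simp
  rw [e3]
  ring

lemma macR_neg {μ : ℝ} (hμ : ∀ n : ℤ, μ ≠ n) {w : ℝ} (hw : 0 < w) :
    macR (-μ) w = w ^ (-μ) * macR μ w := by
  have h0 : μ ≠ 0 := fun h => hμ 0 (by push_cast; linarith)
  have e1 : Real.Gamma (1 - -μ) = μ * Real.Gamma μ := by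
    rw [← Real.Gamma_add_one h0]; ring_nf
  have e2 : Real.Gamma (1 - μ) = -μ * Real.Gamma (-μ) := by
    rw [← Real.Gamma_add_one (neg_ne_zero.2 h0)]; ring_nf
  have e3 : w ^ (-μ) * w ^ μ = 1 := by
    rw [← Real.rpow_add hw]; simp
  rw [macR, macR, e1, e2, neg_neg]
  linear_combination (-μ * Real.Gamma (-μ) * Real.Gamma μ * phiS μ w) * e3

lemma not_int_of_Ioo {μ : ℝ} (h0 : 0 < μ) (h1 : μ < 1) : ∀ n : ℤ, μ ≠ n := by
  rintro n rfl
  have a : (0 : ℤ) < n := by exact_mod_cast h0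
  have b : n < (1 : ℤ) := by exact_mod_cast h1
  omega

lemma macR_tendsto {μ : ℝ} (h0 : 0 < μ) (h1 : μ < 1) :
    Tendsto (macR μ) (𝓝[>] 0) (𝓝 (Real.Gamma μ)) := by
  have hμ := not_int_of_Ioo h0 h1
  have hc : ContinuousAt (macR μ) 0 := by
    refine continuousAt_const.mul ((phiS_hasDerivAt (not_int_neg hμ) 0).continuousAt.sub
      (ContinuousAt.mul ?_ (phiS_hasDerivAt hμ 0).continuousAt))
    exact Real.continuousAt_rpow_const _ _ (Or.inr h0.le)
  have hv : macR μ 0 = Real.Gamma μ := by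
    rw [macR, Real.zero_rpow h0.ne', phiS_zero, zero_mul, sub_zero, ← sub_eq_add_neg]
    have := (Real.Gamma_pos_of_pos (sub_pos.2 h1)).ne'
    field_simp
  rw [← hv]
  exact hc.tendsto.mono_left nhdsWithin_le_nhds

/-- Uniqueness for a singular linear system: since the weights `w^(μ-1)` and `w^(-μ)` are integrable
at `0`, the quantity `(X² + Y²) exp(-w^μ/μ - w^(1-μ)/(1-μ))` is antitone, so it vanishes if `X` and
`Y` tend to `0`. -/
lemma system_unique {μ : ℝ} (h0 : 0 < μ) (h1 : μ < 1) {X Y : ℝ → ℝ}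
    (hX : ∀ w, 0 < w → HasDerivAt X (-(w ^ (μ - 1) * Y w)) w)
    (hY : ∀ w, 0 < w → HasDerivAt Y (-(w ^ (-μ) * X w)) w)
    (tX : Tendsto X (𝓝[>] 0) (𝓝 0)) (tY : Tendsto Y (𝓝[>] 0) (𝓝 0))
    {w : ℝ} (hw : 0 < w) : X w = 0 := by
  have h1' : 0 < 1 - μ := sub_pos.2 h1
  set E : ℝ → ℝ := fun w =>
    (X w ^ 2 + Y w ^ 2) * Real.exp (-(w ^ μ / μ + w ^ (1 - μ) / (1 - μ))) with hE
  have hd : ∀ v, 0 < v → HasDerivAt E (-((X v + Y v) ^ 2 * (v ^ (μ - 1) + v ^ (-μ)) *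
      Real.exp (-(v ^ μ / μ + v ^ (1 - μ) / (1 - μ))))) v := by
    intro v hv
    have a1 := (Real.hasDerivAt_rpow_const (x := v) (p := μ) (Or.inl hv.ne')).div_const μ
    have a2 := (Real.hasDerivAt_rpow_const (x := v) (p := 1 - μ) (Or.inl hv.ne')).div_const (1 - μ)
    have a3 := (a1.add a2).neg.exp
    have a4 := ((hX v hv).pow 2).add ((hY v hv).pow 2)
    refine (a4.mul a3).congr_deriv ?_
    have e1 : μ * v ^ (μ - 1) / μ = v ^ (μ - 1) := by field_simp
    have e2 : (1 - μ) * v ^ (1 - μ - 1) / (1 - μ) = v ^ (-μ) := by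
      rw [mul_div_cancel_left₀ _ h1'.ne']; ring_nf
    rw [e1, e2]
    simp only [Pi.add_apply, Pi.neg_apply, Pi.pow_apply]
    push_cast
    ring
  have hanti : AntitoneOn E (Ioi 0) := by
    refine antitoneOn_of_deriv_nonpos (convex_Ioi 0)
      (fun v hv => (hd v hv).continuousAt.continuousWithinAt) ?_ ?_
    · rw [interior_Ioi]
      exact fun v hv => (hd v hv).differentiableAt.differentiableWithinAt
    · rw [interior_Ioi]
      intro v hv
      have hv : 0 < v := hv
      rw [(hd v hv).deriv]
      exact neg_nonpos.2 (by positivity)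
  have hle : E w ≤ 0 := by
    have ht : Tendsto (fun v => X v ^ 2 + Y v ^ 2) (𝓝[>] 0) (𝓝 0) := by
      simpa using (tX.pow 2).add (tY.pow 2)
    refine ge_of_tendsto ht ?_
    filter_upwards [Ioo_mem_nhdsGT hw] with v hv
    have hv0 : 0 < v := hv.1
    refine (hanti hv0 hw hv.2.le).trans ?_
    refine mul_le_of_le_one_right (by positivity) ?_
    rw [Real.exp_le_one_iff]
    exact neg_nonpos.2 (by positivity)
  have hsq : X w ^ 2 + Y w ^ 2 ≤ 0 := by
    by_contra hcon
    push Not at hcon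
    exact absurd hle (not_le.2 (mul_pos hcon (Real.exp_pos _)))
  nlinarith [sq_nonneg (X w), sq_nonneg (Y w), pow_eq_zero_iff (a := X w) two_ne_zero]

/-- The differences `G - R` at the orders `μ` and `1-μ` satisfy the system of `system_unique`; both
tend to `0` at the origin because `G_μ` and `R_μ` tend to `Γ(μ)`. -/
lemma macG_eq_of_Ioo {μ : ℝ} (h0 : 0 < μ) (h1 : μ < 1) {w : ℝ} (hw : 0 < w) :
    macG μ w = macR μ w := by
  have hμ := not_int_of_Ioo h0 h1
  have hμ' := not_int_of_Ioo (sub_pos.2 h1) (by linarith : 1 - μ < 1)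
  have key := system_unique h0 h1 (X := fun w => macG μ w - macR μ w)
    (Y := fun w => macG (1 - μ) w - macR (1 - μ) w) ?_ ?_ ?_ ?_ hw
  · exact sub_eq_zero.1 key
  · intro v hv
    refine ((macG_hasDerivAt μ hv).sub (macR_hasDerivAt hμ hv)).congr_deriv ?_
    have a := macG_neg (1 - μ) hv
    have b := macR_neg hμ' hv
    rw [neg_sub] at a b
    rw [a, b]; ring
  · intro v hv
    refine ((macG_hasDerivAt (1 - μ) hv).sub (macR_hasDerivAt hμ' hv)).congr_deriv ?_
    have a := macG_neg μ hv
    have b := macR_neg hμ hv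
    rw [show 1 - μ - 1 = -μ by ring, a, b]; ring
  · simpa using (macG_tendsto h0).sub (macR_tendsto h0 h1)
  · simpa using (macG_tendsto (sub_pos.2 h1)).sub (macR_tendsto (sub_pos.2 h1) (by linarith))

lemma macG_eq_sub_nat {μ : ℝ} (h0 : 0 < μ) (h1 : μ < 1) (k : ℕ) :
    ∀ w : ℝ, 0 < w → macG (μ - k) w = macR (μ - k) w := by
  induction k with
  | zero => intro w hw; simpa using macG_eq_of_Ioo h0 h1 hw
  | succ k ih =>
    intro w hw
    have hk : ∀ n : ℤ, μ - k ≠ n := by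
      simpa [sub_eq_add_neg] using not_int_add (not_int_of_Ioo h0 h1) (-k)
    have a := macG_hasDerivAt (μ - k) hw
    have b := macR_hasDerivAt hk hw
    have hev : macG (μ - k) =ᶠ[𝓝 w] macR (μ - k) := by
      filter_upwards [Ioi_mem_nhds hw] with v hv using ih v hv
    have := (b.congr_of_eventuallyEq hev).unique a
    push_cast
    rw [← sub_sub]
    linarith

/-- The series expansion of the Macdonald function of noninteger order. Negative orders come from
`(0,1)` by differentiation, orders above `1` by the reflection `μ ↦ -μ`. -/
lemma macG_eq {μ : ℝ} (hμ : ∀ n : ℤ, μ ≠ n) {w : ℝ} (hw : 0 < w) : macG μ w = macR μ w := by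
  have hneg : ∀ c : ℝ, (∀ n : ℤ, c ≠ n) → c < 1 → macG c w = macR c w := by
    intro c hc hc1
    have hfl : ⌊c⌋ ≤ 0 := by
      have : ⌊c⌋ < 1 := Int.floor_lt.2 (by exact_mod_cast hc1)
      omega
    obtain ⟨k, hk⟩ := Int.eq_ofNat_of_zero_le (neg_nonneg.2 hfl)
    have hf0 : 0 < Int.fract c := by
      refine lt_of_le_of_ne (Int.fract_nonneg c) fun h => ?_
      exact hc ⌊c⌋ (by have := Int.floor_add_fract c; rw [← h] at this; linarith)
    have := macG_eq_sub_nat hf0 (Int.fract_lt_one c) k w hw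
    have e : Int.fract c - k = c := by
      have h2 : (k : ℝ) = -(⌊c⌋ : ℝ) := by exact_mod_cast hk.symm
      have := Int.floor_add_fract c
      rw [h2]; linarith
    rwa [e] at this
  rcases lt_or_ge μ 1 with h | h
  · exact hneg μ hμ h
  · have a := macG_neg μ hw
    have b := macR_neg hμ hw
    rw [hneg (-μ) (not_int_neg hμ) (by linarith), b] at a
    exact (mul_left_cancel₀ (Real.rpow_pos_of_pos hw _).ne' a).symm

/-! ### Beta integrals and the sine transform of a Gaussian -/

lemma beta_half {p : ℝ} (hp : -1 < p) :
    IntegrableOn (fun x : ℝ => x ^ (-(1 / 2) : ℝ) * (1 - x) ^ p) (Ioo 0 1) ∧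
    ∫ x in Ioo (0 : ℝ) 1, x ^ (-(1 / 2) : ℝ) * (1 - x) ^ p =
      Real.sqrt Real.pi * Real.Gamma (p + 1) / Real.Gamma (p + 3 / 2) := by
  have hu : 0 < (((1 / 2 : ℝ) : ℂ)).re := by rw [Complex.ofReal_re]; norm_num
  have hv : 0 < (((p + 1 : ℝ) : ℂ)).re := by rw [Complex.ofReal_re]; linarith
  have h1 := Complex.betaIntegral_convergent hu hv
  have hB := ProbabilityTheory.beta_eq_betaIntegralReal (1 / 2) (p + 1) (by norm_num) (by linarith)
  rw [intervalIntegrable_iff_integrableOn_Ioo_of_le zero_le_one] at h1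
  rw [Complex.betaIntegral, intervalIntegral.integral_of_le zero_le_one,
    integral_Ioc_eq_integral_Ioo] at hB
  have hcongr : EqOn (fun x : ℝ => ((x ^ (-(1 / 2) : ℝ) * (1 - x) ^ p : ℝ) : ℂ))
      (fun x : ℝ => (x : ℂ) ^ (((1 / 2 : ℝ) : ℂ) - 1) * (1 - (x : ℂ)) ^ (((p + 1 : ℝ) : ℂ) - 1))
      (Ioo 0 1) := by
    intro x hx
    simp only
    rw [Complex.ofReal_mul, Complex.ofReal_cpow hx.1.le,
      Complex.ofReal_cpow (sub_nonneg.2 hx.2.le)]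
    push_cast
    congr 2 <;> ring
  have h2 := h1.congr_fun hcongr.symm measurableSet_Ioo
  refine ⟨by simpa [IntegrableOn] using h2.re, ?_⟩
  rw [← setIntegral_congr_fun measurableSet_Ioo hcongr, integral_complex_ofReal] at hB
  have h3 : ∫ x in Ioo (0 : ℝ) 1, x ^ (-(1 / 2) : ℝ) * (1 - x) ^ p =
      ProbabilityTheory.beta (1 / 2) (p + 1) := by
    rw [hB]; exact (Complex.ofReal_re _).symm
  rw [h3, ProbabilityTheory.beta, Real.Gamma_one_half_eq]
  ring_nf

/-- The substitution `x = u²` in `beta_half`. -/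
lemma wallis {p : ℝ} (hp : -1 < p) :
    IntegrableOn (fun u : ℝ => (1 - u ^ 2) ^ p) (Ioo 0 1) ∧
    ∫ u in Ioo (0 : ℝ) 1, (1 - u ^ 2) ^ p =
      Real.sqrt Real.pi / 2 * (Real.Gamma (p + 1) / Real.Gamma (p + 3 / 2)) := by
  obtain ⟨hi, he⟩ := beta_half hp
  have himg : Set.image (fun u : ℝ => u ^ 2) (Ioo 0 1) = Ioo 0 1 := by
    ext y
    constructor
    · rintro ⟨u, ⟨h0, h1⟩, rfl⟩
      exact ⟨by positivity, by show u ^ 2 < 1; nlinarith⟩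
    · rintro ⟨h0, h1⟩
      refine ⟨Real.sqrt y, ⟨Real.sqrt_pos.2 h0, ?_⟩, Real.sq_sqrt h0.le⟩
      rw [Real.sqrt_lt' one_pos]; simpa using h1
  have hd : ∀ u ∈ Ioo (0 : ℝ) 1,
      HasDerivWithinAt (fun u : ℝ => u ^ 2) (2 * u) (Ioo 0 1) u := by
    intro u _
    simpa using (hasDerivAt_pow 2 u).hasDerivWithinAt
  have hinj : InjOn (fun u : ℝ => u ^ 2) (Ioo 0 1) := by
    intro u hu v hv h
    exact (pow_left_inj₀ hu.1.le hv.1.le two_ne_zero).1 h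
  have a := integrableOn_image_iff_integrableOn_abs_deriv_smul measurableSet_Ioo hd hinj
    (fun x : ℝ => x ^ (-(1 / 2) : ℝ) * (1 - x) ^ p)
  have b := integral_image_eq_integral_abs_deriv_smul measurableSet_Ioo hd hinj
    (fun x : ℝ => x ^ (-(1 / 2) : ℝ) * (1 - x) ^ p)
  have hcongr : EqOn (fun u : ℝ => |2 * u| • ((u ^ 2) ^ (-(1 / 2) : ℝ) * (1 - u ^ 2) ^ p))
      (fun u : ℝ => 2 * (1 - u ^ 2) ^ p) (Ioo 0 1) := by
    intro u hu
    have hu0 : 0 < u := hu.1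
    simp only [smul_eq_mul]
    rw [abs_of_pos (by positivity), ← Real.rpow_natCast u 2, ← Real.rpow_mul hu0.le]
    norm_num
    rw [Real.rpow_neg_one]
    field_simp
  rw [himg] at a b
  constructor
  · have := ((a.1 hi).congr_fun hcongr measurableSet_Ioo).const_mul (1 / 2)
    refine this.congr (Eventually.of_forall fun u => ?_)
    simp only
    ring
  · rw [he, setIntegral_congr_fun measurableSet_Ioo hcongr, integral_const_mul] at b
    linear_combination (-1 / 2 : ℝ) * b

/-- The differential equation of Dawson's function: differentiation in `h` gives a cosine integral
with weight `x exp(-t x²)`, which integration by parts turns back into the sine integral. -/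
lemma sin_gauss_hasDerivAt {t : ℝ} (ht : 0 < t) (h : ℝ) :
    HasDerivAt (fun h : ℝ => ∫ x in Ioi (0 : ℝ), Real.sin (h * x) * Real.exp (-t * x ^ 2))
      (1 / (2 * t) - h / (2 * t) *
        ∫ x in Ioi (0 : ℝ), Real.sin (h * x) * Real.exp (-t * x ^ 2)) h := by
  have hg : Integrable (fun x : ℝ => Real.exp (-t * x ^ 2)) (volume.restrict (Ioi 0)) :=
    (integrable_exp_neg_mul_sq ht).integrableOn
  have hxg : Integrable (fun x : ℝ => x * Real.exp (-t * x ^ 2)) (volume.restrict (Ioi 0)) :=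
    (integrable_mul_exp_neg_mul_sq ht).integrableOn
  have hs : Integrable (fun x : ℝ => Real.sin (h * x) * Real.exp (-t * x ^ 2))
      (volume.restrict (Ioi 0)) :=
    hg.bdd_mul (c := 1) (by fun_prop)
      (Eventually.of_forall fun x => by simpa using Real.abs_sin_le_one _)
  have hbd : ∀ᵐ x ∂(volume.restrict (Ioi (0 : ℝ))), ∀ v ∈ (univ : Set ℝ),
      ‖Real.cos (v * x) * (x * Real.exp (-t * x ^ 2))‖ ≤ x * Real.exp (-t * x ^ 2) := by
    refine (ae_restrict_iff' measurableSet_Ioi).2 (Eventually.of_forall fun x hx v _ => ?_)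
    have hx : 0 < x := hx
    rw [norm_mul, Real.norm_of_nonneg (by positivity : 0 ≤ x * Real.exp (-t * x ^ 2))]
    exact mul_le_of_le_one_left (by positivity) (by simpa using Real.abs_cos_le_one _)
  have key := hasDerivAt_integral_of_dominated_loc_of_deriv_le
    (μ := volume.restrict (Ioi (0 : ℝ))) (x₀ := h) (s := univ)
    (F := fun h x => Real.sin (h * x) * Real.exp (-t * x ^ 2))
    (F' := fun h x => Real.cos (h * x) * (x * Real.exp (-t * x ^ 2)))
    (bound := fun x => x * Real.exp (-t * x ^ 2))
    univ_mem (Eventually.of_forall fun v => by fun_prop) hs (by fun_prop) hbd hxg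
    (Eventually.of_forall fun x v _ => by
      have h1 : HasDerivAt (fun v : ℝ => v * x) x v := by
        simpa using (hasDerivAt_id v).mul_const x
      exact (h1.sin.mul_const _).congr_deriv (by ring))
  refine key.2.congr_deriv ?_
  have hf := integral_Ioi_of_hasDerivAt_of_tendsto' (a := 0) (m := 0)
    (f := fun x : ℝ => -(Real.cos (h * x) * Real.exp (-t * x ^ 2)) / (2 * t))
    (f' := fun x : ℝ => Real.cos (h * x) * (x * Real.exp (-t * x ^ 2)) +
      h / (2 * t) * (Real.sin (h * x) * Real.exp (-t * x ^ 2))) ?_ ?_ ?_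
  · rw [integral_add key.1 (hs.const_mul _), integral_const_mul] at hf
    simp only [mul_zero, Real.cos_zero, ne_eq, OfNat.ofNat_ne_zero, not_false_eq_true, zero_pow,
      Real.exp_zero, mul_one, zero_sub] at hf
    linear_combination hf
  · intro x _
    have h1 : HasDerivAt (fun x : ℝ => h * x) h x := by
      simpa using (hasDerivAt_id x).const_mul h
    have h2 : HasDerivAt (fun x : ℝ => -t * x ^ 2) (-t * (2 * x)) x := by
      simpa using (hasDerivAt_pow 2 x).const_mul (-t)
    refine ((h1.cos.mul h2.exp).neg.div_const (2 * t)).congr_deriv ?_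
    field_simp
    ring
  · exact key.1.add (hs.const_mul _)
  · have he : Tendsto (fun x : ℝ => Real.exp (-t * x ^ 2)) atTop (𝓝 0) := by
      refine Real.tendsto_exp_atBot.comp ?_
      exact (tendsto_pow_atTop two_ne_zero).const_mul_atTop_of_neg (neg_lt_zero.2 ht)
    have hb : Tendsto (fun x : ℝ => Real.cos (h * x) * Real.exp (-t * x ^ 2)) atTop (𝓝 0) := by
      refine squeeze_zero_norm (fun x => ?_) he
      rw [norm_mul, Real.norm_of_nonneg (Real.exp_pos _).le]
      exact mul_le_of_le_one_left (Real.exp_pos _).le (by simpa using Real.abs_cos_le_one _)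
    simpa using hb.neg.div_const (2 * t)

/-- The half-line sine transform of a Gaussian (Dawson's function), by solving the first order
linear equation it satisfies in `h`. -/
lemma dawson_s8 {t : ℝ} (ht : 0 < t) (h : ℝ) :
    ∫ x in Ioi (0 : ℝ), Real.sin (h * x) * Real.exp (-t * x ^ 2) =
      h / (2 * t) * ∫ u in Ioo (0 : ℝ) 1, Real.exp (-(h ^ 2 * (1 - u ^ 2) / 4 / t)) := by
  set D : ℝ → ℝ := fun h => ∫ x in Ioi (0 : ℝ), Real.sin (h * x) * Real.exp (-t * x ^ 2) with hD
  have hder : ∀ u : ℝ, HasDerivAt (fun u : ℝ => D (h * u) * Real.exp ((h * u) ^ 2 / (4 * t)))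
      (h / (2 * t) * Real.exp ((h * u) ^ 2 / (4 * t))) u := by
    intro u
    have h1 : HasDerivAt (fun u : ℝ => h * u) h u := by
      simpa using (hasDerivAt_id u).const_mul h
    have h2 := (sin_gauss_hasDerivAt ht (h * u)).comp u h1
    have h3 : HasDerivAt (fun u : ℝ => (h * u) ^ 2 / (4 * t)) (2 * (h * u) * h / (4 * t)) u := by
      simpa using (h1.pow 2).div_const (4 * t)
    refine (h2.mul h3.exp).congr_deriv ?_
    simp only [Function.comp_apply]
    field_simp
    ring
  have hint := intervalIntegral.integral_eq_sub_of_hasDerivAt (a := 0) (b := 1)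
    (fun u _ => hder u) (by apply Continuous.intervalIntegrable; fun_prop)
  have hD0 : D 0 = 0 := by simp [hD]
  rw [intervalIntegral.integral_of_le zero_le_one, integral_Ioc_eq_integral_Ioo,
    integral_const_mul] at hint
  simp only [mul_one, mul_zero, hD0, zero_mul, sub_zero] at hint
  have e : ∀ u : ℝ, Real.exp (-(h ^ 2 * (1 - u ^ 2) / 4 / t)) =
      Real.exp (-(h ^ 2 / (4 * t))) * Real.exp ((h * u) ^ 2 / (4 * t)) := by
    intro u
    rw [← Real.exp_add]
    congr 1
    field_simp
    ring
  simp_rw [e]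
  rw [integral_const_mul, mul_left_comm, hint, mul_left_comm, ← Real.exp_add]
  simp [hD]

/-! ### Averages of Macdonald functions -/

/-- The domination behind the first use of Fubini, valid because `(1+x²)^(-s)` is integrable. -/
lemma integrable_subordination {s : ℝ} (hs : 1 / 2 < s) :
    Integrable (fun q : ℝ × ℝ => q.2 ^ (s - 1) * Real.exp (-((1 + q.1 ^ 2) * q.2)))
      ((volume.restrict (Ioi (0 : ℝ))).prod (volume.restrict (Ioi (0 : ℝ)))) := by
  have hs0 : 0 < s := by linarith
  have hval : ∀ x : ℝ, ∫ t in Ioi (0 : ℝ), t ^ (s - 1) * Real.exp (-((1 + x ^ 2) * t)) =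
      (1 + x ^ 2) ^ (-s) * Real.Gamma s := by
    intro x
    rw [Real.integral_rpow_mul_exp_neg_mul_Ioi hs0 (by positivity), one_div,
      Real.inv_rpow (by positivity), ← Real.rpow_neg (by positivity)]
  have hmeas : Measurable
      (fun q : ℝ × ℝ => q.2 ^ (s - 1) * Real.exp (-((1 + q.1 ^ 2) * q.2))) := by fun_prop
  rw [integrable_prod_iff hmeas.aestronglyMeasurable]
  constructor
  · refine Eventually.of_forall fun x => ?_
    refine Integrable.of_integral_ne_zero ?_
    rw [hval x]
    have := Real.Gamma_pos_of_pos hs0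
    positivity
  · have hn : ∀ x : ℝ,
        ∫ t in Ioi (0 : ℝ), ‖t ^ (s - 1) * Real.exp (-((1 + x ^ 2) * t))‖ =
        (1 + x ^ 2) ^ (-s) * Real.Gamma s := by
      intro x
      rw [← hval x]
      refine setIntegral_congr_fun measurableSet_Ioi fun t ht => ?_
      have ht : 0 < t := ht
      exact Real.norm_of_nonneg (by positivity)
    simp only [hn]
    have hj := integrable_rpow_neg_one_add_norm_sq (E := ℝ) (μ := volume) (r := 2 * s)
      (by simp; linarith)
    have hj' : Integrable (fun x : ℝ => (1 + x ^ 2) ^ (-s)) := by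
      refine hj.congr (Eventually.of_forall fun x => ?_)
      simp only [Real.norm_eq_abs, sq_abs]
      ring_nf
    exact hj'.integrableOn.mul_const _

lemma integrable_macdonald {s z : ℝ} (hs : 1 / 2 < s) (hz : 0 < z) :
    Integrable (fun q : ℝ × ℝ =>
      q.1 ^ (s - 1 - 1) * Real.exp (-q.1 - (z ^ 2 * (1 - q.2 ^ 2) / 4) / q.1))
      ((volume.restrict (Ioi (0 : ℝ))).prod (volume.restrict (Ioo (0 : ℝ) 1))) := by
  have h1 := gamma_integrable (s := s - 1 / 2) (by linarith)
  have h2 := (wallis (p := -(1 / 2)) (by norm_num)).1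
  have h3 := (Integrable.mul_prod h1 h2).const_mul ((z ^ 2 / 4) ^ (-(1 / 2) : ℝ))
  have hmeas : Measurable (fun q : ℝ × ℝ =>
      q.1 ^ (s - 1 - 1) * Real.exp (-q.1 - (z ^ 2 * (1 - q.2 ^ 2) / 4) / q.1)) := by fun_prop
  refine h3.mono' hmeas.aestronglyMeasurable ?_
  rw [Measure.prod_restrict]
  refine (ae_restrict_iff' (measurableSet_Ioi.prod measurableSet_Ioo)).2
    (Eventually.of_forall ?_)
  rintro ⟨t, u⟩ ⟨ht, hu0, hu1⟩
  simp only [mem_Ioi] at ht hu0 hu1 ⊢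
  have hu : 0 < 1 - u ^ 2 := by nlinarith
  rw [Real.norm_of_nonneg (by positivity)]
  -- `exp(-y) ≤ y^(-1/2)` tames the singularity at `t = 0` at the cost of `(1-u²)^(-1/2)`.
  have hexp : ∀ y : ℝ, 0 < y → Real.exp (-y) ≤ y ^ (-(1 / 2) : ℝ) := by
    intro y hy
    have hy2 : y ≤ Real.exp (2 * y) := by linarith [Real.add_one_le_exp (2 * y)]
    calc Real.exp (-y) = Real.exp (2 * y) ^ (-(1 / 2) : ℝ) := by
          rw [← Real.exp_mul]; ring_nf
      _ ≤ y ^ (-(1 / 2) : ℝ) :=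
          Real.rpow_le_rpow_of_nonpos hy hy2 (by norm_num)
  have h4 := hexp (z ^ 2 * (1 - u ^ 2) / 4 / t) (by positivity)
  have h5 : (z ^ 2 * (1 - u ^ 2) / 4 / t) ^ (-(1 / 2) : ℝ) =
      (z ^ 2 / 4) ^ (-(1 / 2) : ℝ) * (1 - u ^ 2) ^ (-(1 / 2) : ℝ) * t ^ (1 / 2 : ℝ) := by
    rw [show z ^ 2 * (1 - u ^ 2) / 4 / t = z ^ 2 / 4 * (1 - u ^ 2) * t⁻¹ by ring,
      Real.mul_rpow (by positivity) (by positivity), Real.mul_rpow (by positivity) hu.le,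
      Real.inv_rpow ht.le, Real.rpow_neg ht.le (1 / 2), inv_inv]
  have h6 : t ^ (s - 1 / 2 - 1) = t ^ (s - 1 - 1) * t ^ (1 / 2 : ℝ) := by
    rw [← Real.rpow_add ht]; ring_nf
  rw [h5] at h4
  rw [sub_eq_add_neg (-t), Real.exp_add, h6]
  calc t ^ (s - 1 - 1) * (Real.exp (-t) * Real.exp (-(z ^ 2 * (1 - u ^ 2) / 4 / t)))
      ≤ t ^ (s - 1 - 1) * (Real.exp (-t) * ((z ^ 2 / 4) ^ (-(1 / 2) : ℝ) *
        (1 - u ^ 2) ^ (-(1 / 2) : ℝ) * t ^ (1 / 2 : ℝ))) := by gcongr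
    _ = _ := by ring

/-- Writing `(1+x²)^(-s)` as a Gamma integral of Gaussians turns the sine transform into an average
of Macdonald functions. -/
lemma sine_transform_eq {s z : ℝ} (hs : 1 / 2 < s) (hz : 0 < z) :
    Real.Gamma s * ∫ x in Ioi (0 : ℝ), Real.sin (z * x) * (1 + x ^ 2) ^ (-s) =
      z / 2 * ∫ u in Ioo (0 : ℝ) 1, macG (s - 1) (z ^ 2 * (1 - u ^ 2) / 4) := by
  have hs0 : 0 < s := by linarith
  have hI : Integrable (fun q : ℝ × ℝ =>
      Real.sin (z * q.1) * (q.2 ^ (s - 1) * Real.exp (-((1 + q.1 ^ 2) * q.2))))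
      ((volume.restrict (Ioi (0 : ℝ))).prod (volume.restrict (Ioi (0 : ℝ)))) := by
    have hm : Measurable fun q : ℝ × ℝ => Real.sin (z * q.1) := by fun_prop
    exact (integrable_subordination hs).bdd_mul (c := 1) hm.aestronglyMeasurable
      (Eventually.of_forall fun x => Real.abs_sin_le_one _)
  have hJ := integrable_macdonald hs hz
  calc Real.Gamma s * ∫ x in Ioi (0 : ℝ), Real.sin (z * x) * (1 + x ^ 2) ^ (-s)
      = ∫ x in Ioi (0 : ℝ), ∫ t in Ioi (0 : ℝ),
          Real.sin (z * x) * (t ^ (s - 1) * Real.exp (-((1 + x ^ 2) * t))) := by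
        rw [← integral_const_mul]
        congr 1
        funext x
        rw [integral_const_mul, Real.integral_rpow_mul_exp_neg_mul_Ioi hs0 (by positivity),
          one_div, Real.inv_rpow (by positivity), ← Real.rpow_neg (by positivity)]
        ring
    _ = ∫ t in Ioi (0 : ℝ), ∫ x in Ioi (0 : ℝ),
          Real.sin (z * x) * (t ^ (s - 1) * Real.exp (-((1 + x ^ 2) * t))) :=
        integral_integral_swap (f := fun x t : ℝ =>
          Real.sin (z * x) * (t ^ (s - 1) * Real.exp (-((1 + x ^ 2) * t)))) hI
    _ = ∫ t in Ioi (0 : ℝ), ∫ u in Ioo (0 : ℝ) 1, z / 2 *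
          (t ^ (s - 1 - 1) * Real.exp (-t - (z ^ 2 * (1 - u ^ 2) / 4) / t)) := by
        refine setIntegral_congr_fun measurableSet_Ioi fun t ht => ?_
        have ht : 0 < t := ht
        have e1 : ∀ x : ℝ, Real.sin (z * x) * (t ^ (s - 1) * Real.exp (-((1 + x ^ 2) * t))) =
            t ^ (s - 1) * Real.exp (-t) * (Real.sin (z * x) * Real.exp (-t * x ^ 2)) := by
          intro x
          rw [show -((1 + x ^ 2) * t) = -t + -t * x ^ 2 by ring, Real.exp_add]
          ring
        have e2 : ∀ u : ℝ, z / 2 *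
            (t ^ (s - 1 - 1) * Real.exp (-t - (z ^ 2 * (1 - u ^ 2) / 4) / t)) =
            t ^ (s - 1) * Real.exp (-t) * (z / (2 * t)) *
              Real.exp (-(z ^ 2 * (1 - u ^ 2) / 4 / t)) := by
          intro u
          rw [sub_eq_add_neg (-t), Real.exp_add, Real.rpow_sub_one ht.ne' (s - 1)]
          field_simp
        simp only [e1, e2]
        rw [integral_const_mul, integral_const_mul, dawson_s8 ht z]
        ring
    _ = ∫ u in Ioo (0 : ℝ) 1, ∫ t in Ioi (0 : ℝ), z / 2 *
          (t ^ (s - 1 - 1) * Real.exp (-t - (z ^ 2 * (1 - u ^ 2) / 4) / t)) :=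
        integral_integral_swap (f := fun t u : ℝ => z / 2 *
          (t ^ (s - 1 - 1) * Real.exp (-t - (z ^ 2 * (1 - u ^ 2) / 4) / t)))
          (hJ.const_mul (z / 2))
    _ = _ := by
        simp only [integral_const_mul]
        rfl

/-- Termwise integration of `(1-u²)^p Φ_c(y(1-u²))` over `(0,1)`. -/
lemma phiS_average {p c y : ℝ} (hp : -1 < p) (hc : ∀ n : ℤ, c ≠ n) :
    IntegrableOn (fun u : ℝ => (1 - u ^ 2) ^ p * phiS c (y * (1 - u ^ 2))) (Ioo 0 1) ∧
    ∫ u in Ioo (0 : ℝ) 1, (1 - u ^ 2) ^ p * phiS c (y * (1 - u ^ 2)) =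
      ∑' m : ℕ, Real.sqrt Real.pi / 2 * (Real.Gamma (m + p + 1) / Real.Gamma (m + p + 3 / 2)) *
        (y ^ m / (m.factorial * Real.Gamma (m + 1 + c))) := by
  have hcont : Continuous (phiS c) :=
    continuous_iff_continuousAt.2 fun w => (phiS_hasDerivAt hc w).continuousAt
  have hpm : ∀ m : ℕ, -1 < (m : ℝ) + p := fun m => by
    have : (0 : ℝ) ≤ m := m.cast_nonneg
    linarith
  constructor
  · obtain ⟨C, hC⟩ := (isCompact_Icc (a := 0) (b := 1)).exists_bound_of_continuousOn
      (f := fun u : ℝ => phiS c (y * (1 - u ^ 2))) (by fun_prop)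
    refine Integrable.mul_bdd (c := C) (wallis hp).1
      (by apply Continuous.aestronglyMeasurable; fun_prop) ?_
    refine (ae_restrict_iff' measurableSet_Ioo).2 (Eventually.of_forall fun u hu => ?_)
    exact hC u (Ioo_subset_Icc_self hu)
  · set A : ℕ → ℝ := fun m => y ^ m / (m.factorial * Real.Gamma (m + 1 + c)) with hA
    have hsum := hasSum_integral_of_summable_integral_norm
      (μ := volume.restrict (Ioo (0 : ℝ) 1))
      (F := fun (m : ℕ) (u : ℝ) => A m * (1 - u ^ 2) ^ ((m : ℝ) + p))
      (fun m => (wallis (hpm m)).1.const_mul _) ?_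
    · have hint : ∫ u in Ioo (0 : ℝ) 1, (1 - u ^ 2) ^ p * phiS c (y * (1 - u ^ 2)) =
          ∫ u in Ioo (0 : ℝ) 1, ∑' m : ℕ, A m * (1 - u ^ 2) ^ ((m : ℝ) + p) := by
        refine setIntegral_congr_fun measurableSet_Ioo fun u hu => ?_
        have hu' : 0 < 1 - u ^ 2 := by nlinarith [hu.1, hu.2]
        simp only [phiS]
        rw [← tsum_mul_left]
        refine tsum_congr fun m => ?_
        rw [Real.rpow_add hu', Real.rpow_natCast, mul_pow]
        simp only [hA]
        ring
      rw [hint, ← hsum.tsum_eq]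
      refine tsum_congr fun m => ?_
      rw [integral_const_mul, (wallis (hpm m)).2]
      ring
    · refine Summable.of_nonneg_of_le (fun m => integral_nonneg fun u => norm_nonneg _)
        (fun m => ?_) ((phiS_summable hc y).norm.mul_right (∫ u in Ioo (0 : ℝ) 1, (1 - u ^ 2) ^ p))
      rw [← integral_const_mul]
      refine setIntegral_mono_on ((wallis (hpm m)).1.const_mul _).norm
        ((wallis hp).1.const_mul _) measurableSet_Ioo fun u hu => ?_
      have hu' : 0 < 1 - u ^ 2 := by nlinarith [hu.1, hu.2]
      rw [norm_mul, Real.norm_of_nonneg (Real.rpow_nonneg hu'.le _)]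
      refine mul_le_mul_of_nonneg_left ?_ (norm_nonneg _)
      refine Real.rpow_le_rpow_of_exponent_ge hu' (by nlinarith [hu.1]) ?_
      have : (0 : ℝ) ≤ m := m.cast_nonneg
      linarith

/-! ### The Struve and Bessel series -/

lemma struve_average {ν z : ℝ} (hint : ∀ n : ℤ, 2 * ν ≠ (n : ℝ)) (hz : 0 < z) :
    z / 2 * ∑' m : ℕ, Real.sqrt Real.pi / 2 *
        (Real.Gamma (m + 0 + 1) / Real.Gamma (m + 0 + 3 / 2)) *
        ((z ^ 2 / 4) ^ m / (m.factorial * Real.Gamma (m + 1 + -(ν - 1 / 2)))) =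
      Real.sqrt Real.pi / 2 * (z / 2) ^ ν * struveLneg ν z := by
  rw [struveLneg, ← tsum_mul_left, ← tsum_mul_left]
  refine tsum_congr fun m => ?_
  have e : (z / 2) ^ (2 * (m : ℝ) - ν + 1) * (z / 2) ^ ν = (z ^ 2 / 4) ^ m * (z / 2) := by
    rw [← Real.rpow_add (by positivity), show 2 * (m : ℝ) - ν + 1 + ν = ((2 * m + 1 : ℕ) : ℝ) by
      push_cast; ring, Real.rpow_natCast, pow_succ, pow_mul, div_pow]
    norm_num
  rw [add_zero, Real.Gamma_nat_eq_factorial,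
    show (m : ℝ) + 1 + -(ν - 1 / 2) = m - ν + 3 / 2 by ring]
  have h1 : Real.Gamma ((m : ℝ) + 3 / 2) ≠ 0 := (Real.Gamma_pos_of_pos (by positivity)).ne'
  have h2 : Real.Gamma ((m : ℝ) - ν + 3 / 2) ≠ 0 := by
    refine Real.Gamma_ne_zero fun k hk => hint (2 * m + 3 + 2 * k) ?_
    push_cast; linarith
  have h3 : (m.factorial : ℝ) ≠ 0 := by positivity
  calc _ = Real.sqrt Real.pi / 2 * ((z ^ 2 / 4) ^ m * (z / 2)) /
        (Real.Gamma ((m : ℝ) + 3 / 2) * Real.Gamma ((m : ℝ) - ν + 3 / 2)) := by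
          field_simp
    _ = _ := by rw [← e]; ring

lemma bessel_average {ν z : ℝ} (hν : 0 < ν) (hz : 0 < z) :
    z / 2 * ((z ^ 2 / 4) ^ (ν - 1 / 2) * ∑' m : ℕ, Real.sqrt Real.pi / 2 *
        (Real.Gamma (m + (ν - 1 / 2) + 1) / Real.Gamma (m + (ν - 1 / 2) + 3 / 2)) *
        ((z ^ 2 / 4) ^ m / (m.factorial * Real.Gamma (m + 1 + (ν - 1 / 2))))) =
      Real.sqrt Real.pi / 2 * (z / 2) ^ ν * besselI ν z := by
  rw [besselI, ← tsum_mul_left, ← tsum_mul_left, ← tsum_mul_left]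
  refine tsum_congr fun m => ?_
  have hz2 : 0 < z / 2 := by positivity
  have e : (z / 2) ^ ν * (z / 2) ^ (ν + 2 * (m : ℝ)) =
      z / 2 * (z ^ 2 / 4) ^ (ν - 1 / 2) * (z ^ 2 / 4) ^ m := by
    have a : z ^ 2 / 4 = (z / 2) ^ (2 : ℝ) := by
      rw [Real.rpow_two]; ring
    rw [a, ← Real.rpow_natCast _ m, ← Real.rpow_mul hz2.le, ← Real.rpow_mul hz2.le,
      ← Real.rpow_add hz2]
    nth_rewrite 2 [← Real.rpow_one (z / 2)]
    rw [← Real.rpow_add hz2, ← Real.rpow_add hz2]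
    ring_nf
  rw [Real.Gamma_nat_eq_factorial,
    show (m : ℝ) + (ν - 1 / 2) + 1 = m + ν + 1 / 2 by ring,
    show (m : ℝ) + 1 + (ν - 1 / 2) = m + ν + 1 / 2 by ring,
    show (m : ℝ) + (ν - 1 / 2) + 3 / 2 = ν + m + 1 by ring]
  have h1 : Real.Gamma ((m : ℝ) + ν + 1 / 2) ≠ 0 := (Real.Gamma_pos_of_pos (by positivity)).ne'
  have h2 : Real.Gamma (ν + m + 1) ≠ 0 := (Real.Gamma_pos_of_pos (by positivity)).ne'
  have h3 : (m.factorial : ℝ) ≠ 0 := by positivity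
  calc _ = Real.sqrt Real.pi / 2 * (z / 2 * (z ^ 2 / 4) ^ (ν - 1 / 2) * (z ^ 2 / 4) ^ m) /
        (m.factorial * Real.Gamma (ν + m + 1)) := by
          field_simp
    _ = _ := by rw [← e]; ring

/-- The case `a = 1`. -/
lemma sine_transform_one {ν z : ℝ} (hν : 0 < ν) (hint : ∀ n : ℤ, 2 * ν ≠ (n : ℝ)) (hz : 0 < z) :
    ∫ x in Ioi (0 : ℝ), Real.sin (z * x) * (1 + x ^ 2) ^ (-(ν + 1 / 2)) =
      Real.sqrt Real.pi / 2 * Real.Gamma (1 / 2 - ν) * (z / 2) ^ ν *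
        (besselI ν z - struveLneg ν z) := by
  have hμ : ∀ n : ℤ, ν - 1 / 2 ≠ n := by
    intro n h
    exact hint (2 * n + 1) (by push_cast; linarith)
  have hz4 : 0 < z ^ 2 / 4 := by positivity
  have hsub := sine_transform_eq (s := ν + 1 / 2) (z := z) (by linarith) hz
  obtain ⟨i1, e1⟩ := phiS_average (p := 0) (y := z ^ 2 / 4) (by norm_num) (not_int_neg hμ)
  obtain ⟨i2, e2⟩ := phiS_average (p := ν - 1 / 2) (y := z ^ 2 / 4) (by linarith) hμ
  have hL := struve_average hint hz
  have hB := bessel_average hν hz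
  rw [← e1] at hL
  rw [← e2] at hB
  have hmac : ∫ u in Ioo (0 : ℝ) 1, macG (ν + 1 / 2 - 1) (z ^ 2 * (1 - u ^ 2) / 4) =
      Real.Gamma (ν - 1 / 2) * Real.Gamma (1 - (ν - 1 / 2)) *
      ((∫ u in Ioo (0 : ℝ) 1, (1 - u ^ 2) ^ (0 : ℝ) *
          phiS (-(ν - 1 / 2)) (z ^ 2 / 4 * (1 - u ^ 2))) -
        (z ^ 2 / 4) ^ (ν - 1 / 2) * ∫ u in Ioo (0 : ℝ) 1, (1 - u ^ 2) ^ (ν - 1 / 2) *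
          phiS (ν - 1 / 2) (z ^ 2 / 4 * (1 - u ^ 2))) := by
    rw [← integral_const_mul ((z ^ 2 / 4) ^ (ν - 1 / 2)), ← integral_sub i1 (i2.const_mul _),
      ← integral_const_mul]
    refine setIntegral_congr_fun measurableSet_Ioo fun u hu => ?_
    have hu' : 0 < 1 - u ^ 2 := by nlinarith [hu.1, hu.2]
    rw [show ν + 1 / 2 - 1 = ν - 1 / 2 by ring,
      show z ^ 2 * (1 - u ^ 2) / 4 = z ^ 2 / 4 * (1 - u ^ 2) by ring,
      macG_eq hμ (by positivity), macR, Real.rpow_zero, one_mul, Real.mul_rpow hz4.le hu'.le]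
    ring
  have hm1 : ν - 1 / 2 ≠ 0 := fun h => hμ 0 (by push_cast; linarith)
  have g1 : Real.Gamma (ν + 1 / 2) = (ν - 1 / 2) * Real.Gamma (ν - 1 / 2) := by
    rw [← Real.Gamma_add_one hm1]; ring_nf
  have g2 : Real.Gamma (1 - (ν - 1 / 2)) = (1 / 2 - ν) * Real.Gamma (1 / 2 - ν) := by
    rw [← Real.Gamma_add_one (by intro h; apply hm1; linarith)]; ring_nf
  have g0 : Real.Gamma (ν + 1 / 2) ≠ 0 := (Real.Gamma_pos_of_pos (by positivity)).ne'
  rw [hmac] at hsub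
  refine mul_left_cancel₀ g0 ?_
  rw [hsub, g2, g1]
  linear_combination (Real.Gamma (ν - 1 / 2) * ((1 / 2 - ν) * Real.Gamma (1 / 2 - ν))) * (hL - hB)

/-- For `a > 0`, `h > 0` and `ν > 0` with `2ν` not an integer,
`∫_0^∞ sin(hx) (a² + x²)^{−ν−1/2} dx
   = (√π/2) Γ(1/2 − ν) (h/(2a))^ν (I_ν(ah) − L_{−ν}(ah))`. -/
theorem stmt_8 (a h ν : ℝ) (ha : 0 < a) (hh : 0 < h) (hν : 0 < ν)
    (hint : ∀ n : ℤ, 2 * ν ≠ (n : ℝ)) :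
    ∫ x in Set.Ioi (0 : ℝ), Real.sin (h * x) * (a ^ 2 + x ^ 2) ^ (-(ν + 1/2)) =
      Real.sqrt Real.pi / 2 * Real.Gamma (1/2 - ν) * (h / (2 * a)) ^ ν *
        (besselI ν (a * h) - struveLneg ν (a * h)) := by
  have h1 := sine_transform_one hν hint (mul_pos ha hh)
  have h2 := integral_comp_mul_left_Ioi'
    (fun x : ℝ => Real.sin (h * x) * (a ^ 2 + x ^ 2) ^ (-(ν + 1/2))) 0 ha
  rw [mul_zero] at h2
  have e : ∀ x : ℝ, Real.sin (h * (a * x)) * (a ^ 2 + (a * x) ^ 2) ^ (-(ν + 1/2)) =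
      a ^ (-(2 * ν + 1)) * (Real.sin (a * h * x) * (1 + x ^ 2) ^ (-(ν + 1/2))) := by
    intro x
    rw [show a ^ 2 + (a * x) ^ 2 = a ^ 2 * (1 + x ^ 2) by ring,
      Real.mul_rpow (by positivity) (by positivity), ← Real.rpow_natCast a 2,
      ← Real.rpow_mul ha.le, show h * (a * x) = a * h * x by ring,
      show ((2 : ℕ) : ℝ) * -(ν + 1/2) = -(2 * ν + 1) by push_cast; ring]
    ring
  simp only [e] at h2
  rw [← h2, integral_const_mul, h1, smul_eq_mul]
  have e2 : a * h / 2 = a ^ (2 : ℝ) * (h / (2 * a)) := by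
    rw [Real.rpow_two]; field_simp
  have e3 : a * (a ^ (-(2 * ν + 1)) * a ^ (2 * ν)) = 1 := by
    rw [← Real.rpow_add ha, show -(2 * ν + 1) + 2 * ν = -1 by ring, Real.rpow_neg_one]
    field_simp
  rw [e2, Real.mul_rpow (by positivity) (by positivity), ← Real.rpow_mul ha.le]
  linear_combination (Real.sqrt Real.pi / 2 * Real.Gamma (1/2 - ν) * (h / (2 * a)) ^ ν *
    (besselI ν (a * h) - struveLneg ν (a * h))) * e3
end

section
/- Let a > 0 and h > 0. Then the principal value Hilbert transform of the Laplace function u ↦ e^{−a|u|} at h exists and equals lim_{ε→0⁺} (1/π) ∫_{{u : |h−u| > ε}} e^{−a|u|} / (h − u) du = (1/π) ( e^{a h} E1(a h) + e^{−a h} Ei(a h) ). Consequently, the Matérn cross-covariance with purely imaginary directional measure and ν_j = ν_k = 1/2, a_j = a_k = a is proportional to −sign(h)(1/π)(e^{a|h|} E1(a|h|) + e^{−a|h|} Ei(a|h|)). -/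
open MeasureTheory Topology Filter

/-!
For `0 < ε < h` the domain `{ε < |h - u|}` splits into `u ≤ 0`, `0 < u < h - ε` and `h + ε < u`.
The substitution `t = a (h - u)` turns the first piece into `e^{ah} E1(ah)`, exactly, and the
substitution `t = a (u - h)` turns the other two into `e^{-ah}` times the truncated exponential
integral at `x = ah` with cut-off `a ε` (`truncated_hilbert_eq`). So everything reduces to the
existence of the principal value `Ei(x)` (`exists_tendsto_truncatedEi`). Folding the negative
half of its truncation onto the positive one cancels the singularity: the truncation at `ε` is
`∫_ε^x 2 sinh s / s ds - ∫_x^∞ e^{-t}/t dt`, whose first integrand extends continuously to `0`.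
-/

/-- The truncated principal value whose limit as `ε → 0⁺` is `Ei x`. -/
noncomputable def truncatedEi (x ε : ℝ) : ℝ :=
  (-∫ t in (-x)..(-ε), Real.exp (-t) / t) - ∫ t in Set.Ioi ε, Real.exp (-t) / t

lemma integrableOn_exp_neg_div {c : ℝ} (hc : 0 < c) :
    IntegrableOn (fun t : ℝ => Real.exp (-t) / t) (Set.Ioi c) := by
  have h1 : IntegrableOn (fun t : ℝ => Real.exp (-t) * c⁻¹) (Set.Ioi c) :=
    (integrableOn_exp_neg_Ioi c).mul_const _
  refine Integrable.mono' h1 (Measurable.aestronglyMeasurable (by fun_prop)) ?_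
  refine (ae_restrict_mem measurableSet_Ioi).mono fun t ht => ?_
  have ht' : c < t := ht
  have htp : 0 < t := hc.trans ht'
  rw [Real.norm_of_nonneg (by positivity), div_eq_mul_inv]
  gcongr

/-- Affine change of variables `t = c u + d`, with the integrability statement included. -/
lemma affine_subst {f g : ℝ → ℝ} {s T : Set ℝ} {c d k : ℝ} (hc : c ≠ 0)
    (hT : MeasurableSet T) (hs : s = (fun u => c * u + d) ⁻¹' T) (hf : IntegrableOn f T)
    (hg : ∀ u ∈ s, g u = k * (|c| * f (c * u + d))) :
    IntegrableOn g s ∧ ∫ u in s, g u = k * ∫ t in T, f t := by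
  have hms : MeasurableSet s := by
    rw [hs]
    exact (by fun_prop : Measurable fun u : ℝ => c * u + d) hT
  have hsurj : Function.Surjective (fun u : ℝ => c * u + d) := fun y =>
    ⟨(y - d) / c, by simp only; field_simp; ring⟩
  have himg : (fun u => c * u + d) '' s = T := by
    rw [hs, Set.image_preimage_eq _ hsurj]
  have hder : ∀ x ∈ s, HasDerivWithinAt (fun u : ℝ => c * u + d) c s x := fun x _ => by
    simpa using (((hasDerivAt_id x).const_mul c).add_const d).hasDerivWithinAt
  have hinj : Set.InjOn (fun u : ℝ => c * u + d) s := fun x _ y _ hxy => by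
    simpa [hc] using hxy
  have hi := (integrableOn_image_iff_integrableOn_abs_deriv_smul hms hder hinj f).1
    (by rwa [himg])
  have he := integral_image_eq_integral_abs_deriv_smul hms hder hinj f
  rw [himg] at he
  simp only [smul_eq_mul] at hi he
  constructor
  · exact IntegrableOn.congr_fun (hi.const_mul k) (fun u hu => (hg u hu).symm) hms
  · rw [he, setIntegral_congr_fun hms hg, integral_const_mul]

lemma intervalIntegrable_exp_neg_div {x y : ℝ} (h : (0 : ℝ) ∉ Set.uIcc x y) :
    IntervalIntegrable (fun t : ℝ => Real.exp (-t) / t) volume x y := by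
  apply ContinuousOn.intervalIntegrable
  refine ContinuousOn.div (by fun_prop) (by fun_prop) ?_
  rintro t ht rfl
  exact h ht

lemma truncated_hilbert_eq {a h ε : ℝ} (ha : 0 < a) (hε : 0 < ε) (hεh : ε < h) :
    ∫ u in {u : ℝ | ε < |h - u|}, Real.exp (-a * |u|) / (h - u) =
      Real.exp (a * h) * (∫ t in Set.Ioi (a * h), Real.exp (-t) / t) +
        Real.exp (-(a * h)) * truncatedEi (a * h) (a * ε) := by
  have hh : 0 < h := hε.trans hεh
  have hah : 0 < a * h := mul_pos ha hh
  have haε : 0 < a * ε := mul_pos ha hε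
  have hlt : a * ε < a * h := mul_lt_mul_of_pos_left hεh ha
  have hset : {u : ℝ | ε < |h - u|} =
      (Set.Iic 0 ∪ Set.Ioo 0 (h - ε)) ∪ Set.Ioi (h + ε) := by
    ext u
    simp only [Set.mem_ofPred_eq, Set.mem_union, Set.mem_Iic, Set.mem_Ioo, Set.mem_Ioi, lt_abs]
    grind
  have hneg : IntervalIntegrable (fun t : ℝ => Real.exp (-t) / t) volume
      (-(a * h)) (-(a * ε)) := by
    apply intervalIntegrable_exp_neg_div
    rw [Set.uIcc_of_le (by linarith), Set.mem_Icc]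
    intro h0
    linarith [h0.2]
  obtain ⟨i1, e1⟩ := affine_subst (f := fun t => Real.exp (-t) / t)
    (g := fun u => Real.exp (-a * |u|) / (h - u)) (s := Set.Iic 0) (T := Set.Ici (a * h))
    (c := -a) (d := a * h) (k := Real.exp (a * h)) (by linarith) measurableSet_Ici
    (by
      ext u
      simp only [Set.mem_Iic, Set.mem_preimage, Set.mem_Ici]
      constructor
      · intro hu
        nlinarith
      · intro hu
        by_contra! hcon
        nlinarith)
    (by
      rw [integrableOn_Ici_iff_integrableOn_Ioi]
      exact integrableOn_exp_neg_div hah)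
    (by
      intro u hu
      have hu' : u ≤ 0 := hu
      have h1 : h - u ≠ 0 := by linarith
      have h2 : -a * u + a * h = a * (h - u) := by ring
      rw [abs_of_nonpos hu', abs_neg, abs_of_pos ha, h2,
        show -a * -u = a * h + -(a * (h - u)) by ring, Real.exp_add]
      field_simp)
  obtain ⟨i2, e2⟩ := affine_subst (f := fun t => Real.exp (-t) / t)
    (g := fun u => Real.exp (-a * |u|) / (h - u)) (s := Set.Ioo 0 (h - ε))
    (T := Set.Ioo (-(a * h)) (-(a * ε)))
    (c := a) (d := -(a * h)) (k := -Real.exp (-(a * h))) ha.ne' measurableSet_Ioo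
    (by
      ext u
      simp only [Set.mem_Ioo, Set.mem_preimage]
      constructor
      · rintro ⟨h1, h2⟩
        constructor <;> nlinarith
      · rintro ⟨h1, h2⟩
        constructor
        · by_contra! hcon
          nlinarith
        · by_contra! hcon
          nlinarith)
    (by
      rw [intervalIntegrable_iff_integrableOn_Ioo_of_le (by linarith)] at hneg
      exact hneg)
    (by
      rintro u ⟨hu, hu2⟩
      have h1 : h - u ≠ 0 := by linarith
      have h2 : a * u + -(a * h) = -(a * (h - u)) := by ring
      rw [abs_of_pos hu, abs_of_pos ha, h2,
        show -a * u = -(a * h) + -(-(a * (h - u))) by ring, Real.exp_add]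
      field_simp)
  obtain ⟨i3, e3⟩ := affine_subst (f := fun t => Real.exp (-t) / t)
    (g := fun u => Real.exp (-a * |u|) / (h - u)) (s := Set.Ioi (h + ε))
    (T := Set.Ioi (a * ε))
    (c := a) (d := -(a * h)) (k := -Real.exp (-(a * h))) ha.ne' measurableSet_Ioi
    (by
      ext u
      simp only [Set.mem_Ioi, Set.mem_preimage]
      constructor
      · intro hu
        nlinarith
      · intro hu
        by_contra! hcon
        nlinarith)
    (integrableOn_exp_neg_div haε)
    (by
      intro u hu
      have hu' : h + ε < u := hu
      have h1 : h - u ≠ 0 := by linarith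
      have h2 : a * u + -(a * h) = -(a * (h - u)) := by ring
      rw [abs_of_pos (by linarith : 0 < u), abs_of_pos ha, h2,
        show -a * u = -(a * h) + -(-(a * (h - u))) by ring, Real.exp_add]
      field_simp)
  rw [hset, setIntegral_union _ measurableSet_Ioi (i1.union i2) i3,
    setIntegral_union _ measurableSet_Ioo i1 i2, e1, e2, e3, integral_Ici_eq_integral_Ioi,
    truncatedEi, intervalIntegral.integral_of_le (by linarith), integral_Ioc_eq_integral_Ioo]
  · ring
  · rw [Set.disjoint_left]
    rintro u hu ⟨hu2, _⟩
    exact absurd hu2 (not_lt.2 hu)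
  · rw [Set.disjoint_left]
    rintro u (hu | ⟨_, hu⟩) hu2
    · have h1 : u ≤ 0 := hu
      have h2 : h + ε < u := hu2
      linarith
    · have h2 : h + ε < u := hu2
      linarith

lemma exists_tendsto_truncatedEi {x : ℝ} (hx : 0 < x) :
    ∃ Ei : ℝ, Tendsto (truncatedEi x) (𝓝[>] (0 : ℝ)) (𝓝 Ei) := by
  -- `G s = 2 sinh s / s`, extended continuously to `s = 0`
  let G : ℝ → ℝ := fun s => 2 * dslope Real.sinh 0 s
  have hG : Continuous G := by
    refine continuous_const.mul (continuous_iff_continuousAt.2 fun s => ?_)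
    rcases eq_or_ne s 0 with rfl | hs
    · exact continuousAt_dslope_same.2 Real.differentiable_sinh.differentiableAt
    · exact (continuousAt_dslope_of_ne hs).2 Real.continuous_sinh.continuousAt
  have hcont : Continuous fun ε : ℝ => ∫ s in x..ε, G s :=
    intervalIntegral.continuous_primitive (fun _ _ => hG.intervalIntegrable _ _) x
  refine ⟨(-∫ s in x..0, G s) - ∫ t in Set.Ioi x, Real.exp (-t) / t, ?_⟩
  have ht : Tendsto (fun ε => (-∫ s in x..ε, G s) - ∫ t in Set.Ioi x, Real.exp (-t) / t)
      (𝓝[>] (0 : ℝ)) (𝓝 ((-∫ s in x..0, G s) - ∫ t in Set.Ioi x, Real.exp (-t) / t)) :=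
    ((hcont.neg.sub continuous_const).tendsto 0).mono_left nhdsWithin_le_nhds
  refine ht.congr' ?_
  filter_upwards [Ioo_mem_nhdsGT hx] with ε hε
  obtain ⟨hε0, hεx⟩ := hε
  have h0 : (0 : ℝ) ∉ Set.uIcc ε x := by
    rw [Set.uIcc_of_le hεx.le, Set.mem_Icc]
    intro h
    linarith [h.1]
  have hi1 := intervalIntegrable_exp_neg_div h0
  have hi2 : IntervalIntegrable (fun t : ℝ => Real.exp t / t) volume ε x := by
    apply ContinuousOn.intervalIntegrable
    refine ContinuousOn.div (by fun_prop) (by fun_prop) ?_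
    rintro t ht rfl
    exact h0 ht
  have hsplit := intervalIntegral.integral_Ioi_sub_Ioi (integrableOn_exp_neg_div hε0) hεx.le
  have hfold : ∫ t in (-x)..(-ε), Real.exp (-t) / t = -∫ s in ε..x, Real.exp s / s := by
    rw [← intervalIntegral.integral_comp_neg, ← intervalIntegral.integral_neg]
    simp [div_neg]
  have hGint : ∫ s in ε..x, G s =
      (∫ s in ε..x, Real.exp s / s) - ∫ s in ε..x, Real.exp (-s) / s := by
    rw [← intervalIntegral.integral_sub hi2 hi1]
    refine intervalIntegral.integral_congr fun s hs => ?_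
    have hs0 : s ≠ 0 := fun h => h0 (h ▸ hs)
    simp only [G, dslope_of_ne _ hs0, slope_def_field, Real.sinh_eq, neg_zero, sub_self,
      zero_div, sub_zero]
    field_simp
  rw [truncatedEi, hfold, ← intervalIntegral.integral_symm, hGint]
  linarith

/-- For `a > 0` and `h > 0`, the principal value Hilbert transform of
`u ↦ e^{−a|u|}` at `h` exists and equals `(1/π)(e^{ah} E1(ah) + e^{−ah} Ei(ah))`, where
`E1(x) = ∫_x^∞ e^{−t}/t dt` and `Ei(x)` is the principal value exponential integral
`Ei(x) = lim_{ε→0⁺} (−∫_{−x}^{−ε} e^{−t}/t dt − ∫_ε^∞ e^{−t}/t dt)`. -/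
theorem stmt_9 (a h : ℝ) (ha : 0 < a) (hh : 0 < h) :
    ∃ Ei : ℝ,
      Tendsto (fun ε : ℝ =>
          (-∫ t in (-(a * h))..(-ε), Real.exp (-t) / t) - ∫ t in Set.Ioi ε, Real.exp (-t) / t)
        (𝓝[>] (0 : ℝ)) (𝓝 Ei) ∧
      Tendsto (fun ε : ℝ =>
          (1 / Real.pi) * ∫ u in {u : ℝ | ε < |h - u|}, Real.exp (-a * |u|) / (h - u))
        (𝓝[>] (0 : ℝ))
        (𝓝 ((1 / Real.pi) * (Real.exp (a * h) * (∫ t in Set.Ioi (a * h), Real.exp (-t) / t) +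
          Real.exp (-(a * h)) * Ei))) := by
  obtain ⟨Ei, hEi⟩ := exists_tendsto_truncatedEi (mul_pos ha hh)
  refine ⟨Ei, hEi, Tendsto.const_mul _ ?_⟩
  have hscale : Tendsto (fun ε : ℝ => a * ε) (𝓝[>] (0 : ℝ)) (𝓝[>] (0 : ℝ)) := by
    refine tendsto_nhdsWithin_iff.2 ⟨?_, ?_⟩
    · have : Tendsto (fun ε : ℝ => a * ε) (𝓝 0) (𝓝 (a * 0)) :=
        (continuous_const.mul continuous_id).tendsto 0
      rw [mul_zero] at this
      exact this.mono_left nhdsWithin_le_nhds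
    · filter_upwards [self_mem_nhdsWithin] with ε hε
      exact mul_pos ha hε
  refine (((hEi.comp hscale).const_mul _).const_add _).congr' ?_
  filter_upwards [Ioo_mem_nhdsGT hh] with ε hε
  exact (truncated_hilbert_eq ha hε.1 hε.2).symm
end

section
/- Let a_j, a_k > 0, write a_+ := (a_j + a_k)/2, and let σ ∈ ℂ. Define the cross-spectral density f(x) := (1 / (2√π (a_j a_k)^{1/4})) · exp( −x² (1/a_j + 1/a_k) / 8 ) · ( Re(σ) + i sign(x) Im(σ) ) for x ∈ ℝ. Then for every h ∈ ℝ, ∫_ℝ e^{i h x} f(x) dx = ((a_j a_k)^{1/4} / √(a_+)) · [ Re(σ) exp( −(a_j a_k / a_+) h² ) − Im(σ) (2/√π) F( √(a_j a_k / a_+) · h ) ], where F is Dawson's integral. In particular the cross-covariance is real-valued, reduces to the squared-exponential covariance when a_j = a_k and Im(σ) = 0, and the Dawson term is an odd function of h. -/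
/-!
The exponent of the density is `-b x²` with `b = (1/a_j + 1/a_k)/8`. With
`q = √(a_j a_k / a₊)` this reads `4 b q² = 1`, and every constant in the formula is expressed
through `q`.

Splitting `σ` into real and imaginary parts, the real part contributes the classical Fourier
transform of a Gaussian. In the imaginary part, `sign x · cos (h x) e^{-b x²}` is odd and integrates
to zero, while `sign x · sin (h x) e^{-b x²}` is even and integrates to twice the half-line sine
transform `T(h) = ∫_0^∞ sin (h x) e^{-b x²} dx`.

The identity `T(h) = 2 q F(q h)` (`sineTransform_eq_dawson`) follows from an ODE: differentiating
under the integral sign and integrating by parts gives `T' = 2q² - 2q² h T`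
(`hasDerivAt_sineTransform`), while `F' = 1 - 2 z F` (`hasDerivAt_dawson`) shows that `2 q F(q h)`
solves the same linear equation. Both vanish at `0`, so they agree.
-/

open MeasureTheory Complex

/-- Dawson's integral `F(z) = e^{−z²} ∫_0^z e^{t²} dt`. -/
noncomputable def dawson (z : ℝ) : ℝ := Real.exp (-z ^ 2) * ∫ t in (0 : ℝ)..z, Real.exp (t ^ 2)

lemma dawson_neg (z : ℝ) : dawson (-z) = -dawson z := by
  have h := intervalIntegral.integral_comp_neg (a := 0) (b := z) (fun t : ℝ => Real.exp (t ^ 2))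
  simp only [neg_sq, neg_zero] at h
  unfold dawson
  rw [intervalIntegral.integral_symm, ← h, neg_sq]
  ring

lemma hasDerivAt_dawson (z : ℝ) : HasDerivAt dawson (1 - 2 * z * dawson z) z := by
  have hc : Continuous fun t : ℝ => Real.exp (t ^ 2) := by fun_prop
  have h1 := (hc.integral_hasStrictDerivAt 0 z).hasDerivAt
  have h2 : HasDerivAt (fun z : ℝ => Real.exp (-z ^ 2)) (Real.exp (-z ^ 2) * (-(2 * z))) z := by
    simpa using ((hasDerivAt_pow 2 z).fun_neg).exp
  refine (h2.mul h1).congr_deriv ?_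
  have h3 : Real.exp (-z ^ 2) * Real.exp (z ^ 2) = 1 := by
    rw [← Real.exp_add]; simp
  rw [h3]
  unfold dawson
  ring

/-- The half-line sine transform `∫_0^∞ sin (h x) e^{-b x²} dx` of a Gaussian. -/
noncomputable def sineTransform (b h : ℝ) : ℝ :=
  ∫ x in Set.Ioi (0 : ℝ), Real.sin (h * x) * Real.exp (-b * x ^ 2)

lemma integrable_sin_mul_gaussian {b : ℝ} (hb : 0 < b) (h : ℝ) :
    Integrable fun x : ℝ => Real.sin (h * x) * Real.exp (-b * x ^ 2) := by
  refine (integrable_exp_neg_mul_sq hb).mono' (by fun_prop) (.of_forall fun x => ?_)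
  rw [norm_mul, Real.norm_eq_abs, Real.norm_eq_abs, Real.abs_exp]
  exact mul_le_of_le_one_left (Real.exp_pos _).le (Real.abs_sin_le_one _)

lemma norm_mul_cos_mul_gaussian_le (b h x : ℝ) :
    ‖x * Real.cos (h * x) * Real.exp (-b * x ^ 2)‖ ≤ ‖x * Real.exp (-b * x ^ 2)‖ := by
  rw [norm_mul, norm_mul, norm_mul]
  gcongr
  exact mul_le_of_le_one_right (norm_nonneg _) (Real.abs_cos_le_one _)

lemma integrable_mul_cos_mul_gaussian {b : ℝ} (hb : 0 < b) (h : ℝ) :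
    Integrable fun x : ℝ => x * Real.cos (h * x) * Real.exp (-b * x ^ 2) :=
  (integrable_mul_exp_neg_mul_sq hb).mono (by fun_prop)
    (.of_forall fun x => norm_mul_cos_mul_gaussian_le b h x)

/-- Integration by parts, with antiderivative `-cos (h x) e^{-b x²} / (2b)`. -/
lemma integral_mul_cos_mul_gaussian {b : ℝ} (hb : 0 < b) (h : ℝ) :
    ∫ x in Set.Ioi (0 : ℝ), x * Real.cos (h * x) * Real.exp (-b * x ^ 2) =
      1 / (2 * b) - h / (2 * b) * sineTransform b h := by
  have hd : ∀ x ∈ Set.Ici (0 : ℝ),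
      HasDerivAt (fun x : ℝ => -(1 / (2 * b)) * (Real.cos (h * x) * Real.exp (-b * x ^ 2)))
        (x * Real.cos (h * x) * Real.exp (-b * x ^ 2) +
          h / (2 * b) * (Real.sin (h * x) * Real.exp (-b * x ^ 2))) x := by
    intro x _
    have h1 : HasDerivAt (fun x : ℝ => Real.cos (h * x)) (-Real.sin (h * x) * h) x := by
      simpa using ((hasDerivAt_id x).const_mul h).cos
    have h2 : HasDerivAt (fun x : ℝ => Real.exp (-b * x ^ 2))
        (Real.exp (-b * x ^ 2) * (-b * (2 * x))) x := by
      simpa using ((hasDerivAt_pow 2 x).const_mul (-b)).exp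
    refine ((h1.mul h2).const_mul (-(1 / (2 * b)))).congr_deriv ?_
    field_simp
    ring
  have hi1 := (integrable_mul_cos_mul_gaussian hb h).integrableOn (s := Set.Ioi (0 : ℝ))
  have hi2 := ((integrable_sin_mul_gaussian hb h).const_mul (h / (2 * b))).integrableOn
    (s := Set.Ioi (0 : ℝ))
  have hgauss : Filter.Tendsto (fun x : ℝ => Real.exp (-b * x ^ 2)) Filter.atTop (nhds 0) := by
    refine Real.tendsto_exp_atBot.comp ?_
    exact (Filter.tendsto_pow_atTop two_ne_zero).const_mul_atTop_of_neg (neg_lt_zero.2 hb)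
  have hlim : Filter.Tendsto
      (fun x : ℝ => -(1 / (2 * b)) * (Real.cos (h * x) * Real.exp (-b * x ^ 2)))
      Filter.atTop (nhds 0) := by
    rw [← mul_zero (-(1 / (2 * b)))]
    refine Filter.Tendsto.const_mul _ (squeeze_zero_norm (fun x => ?_) hgauss)
    rw [norm_mul, Real.norm_eq_abs, Real.norm_eq_abs, Real.abs_exp]
    exact mul_le_of_le_one_left (Real.exp_pos _).le (Real.abs_cos_le_one _)
  have key := integral_Ioi_of_hasDerivAt_of_tendsto' hd (hi1.add hi2) hlim
  rw [integral_add hi1 hi2, integral_const_mul] at key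
  simp only [mul_zero, Real.cos_zero, ne_eq, OfNat.ofNat_ne_zero, not_false_eq_true, zero_pow,
    Real.exp_zero, mul_one] at key
  unfold sineTransform
  linarith

lemma hasDerivAt_sineTransform {b : ℝ} (hb : 0 < b) (h : ℝ) :
    HasDerivAt (sineTransform b) (1 / (2 * b) - h / (2 * b) * sineTransform b h) h := by
  rw [← integral_mul_cos_mul_gaussian hb h]
  refine (hasDerivAt_integral_of_dominated_loc_of_deriv_le
    (F := fun h x : ℝ => Real.sin (h * x) * Real.exp (-b * x ^ 2))
    (F' := fun h x : ℝ => x * Real.cos (h * x) * Real.exp (-b * x ^ 2))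
    (bound := fun x : ℝ => ‖x * Real.exp (-b * x ^ 2)‖) (s := Set.univ)
    Filter.univ_mem (.of_forall fun _ => by fun_prop)
    (integrable_sin_mul_gaussian hb h).integrableOn (by fun_prop)
    (.of_forall fun x y _ => norm_mul_cos_mul_gaussian_le b y x)
    (integrable_mul_exp_neg_mul_sq hb).norm.integrableOn
    (.of_forall fun x y _ => ?_)).2
  have h1 : HasDerivAt (fun y : ℝ => Real.sin (y * x)) (Real.cos (y * x) * x) y := by
    simpa using ((hasDerivAt_id y).mul_const x).sin
  exact (h1.mul_const _).congr_deriv (by ring)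

/-- Both sides solve `y' = 2q² - 2q² h y`, `y(0) = 0`; their difference times the integrating
factor `e^{q² h²}` is therefore constant and zero. -/
lemma sineTransform_eq_dawson {b q : ℝ} (hb : 0 < b) (hbq : 4 * b * q ^ 2 = 1) (h : ℝ) :
    sineTransform b h = 2 * q * dawson (q * h) := by
  have hb2 : 1 / (2 * b) = 2 * q ^ 2 := by
    rw [div_eq_iff (by positivity)]; linarith
  have hd : ∀ y : ℝ, HasDerivAt
      (fun y => (sineTransform b y - 2 * q * dawson (q * y)) * Real.exp (q ^ 2 * y ^ 2)) 0 y := by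
    intro y
    have h1 := hasDerivAt_sineTransform hb y
    have h2 : HasDerivAt (fun y => dawson (q * y))
        ((1 - 2 * (q * y) * dawson (q * y)) * q) y := by
      have := (hasDerivAt_dawson (q * y)).comp y ((hasDerivAt_id y).const_mul q)
      simpa [Function.comp_def] using this
    have h3 : HasDerivAt (fun y : ℝ => Real.exp (q ^ 2 * y ^ 2))
        (Real.exp (q ^ 2 * y ^ 2) * (q ^ 2 * (2 * y))) y := by
      simpa using ((hasDerivAt_pow 2 y).const_mul (q ^ 2)).exp
    refine ((h1.sub (h2.const_mul (2 * q))).mul h3).congr_deriv ?_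
    rw [show y / (2 * b) = y * (1 / (2 * b)) by ring, hb2]
    simp only [Pi.sub_apply]
    ring
  have hconst := is_const_of_deriv_eq_zero (fun y => (hd y).differentiableAt)
    (fun y => (hd y).deriv) h 0
  have h0 : sineTransform b 0 = 0 := by simp [sineTransform]
  have d0 : dawson 0 = 0 := by simp [dawson]
  simp only [h0, mul_zero, d0, sub_self, zero_mul] at hconst
  have := (mul_eq_zero.1 hconst).resolve_right (Real.exp_pos _).ne'
  linarith

/-- The Fourier transform of the Gaussian, with `√(π/b)` written as `2 q √π`. -/
lemma integral_cexp_mul_gaussian {b q : ℝ} (hb : 0 < b) (hq : 0 < q) (hbq : 4 * b * q ^ 2 = 1)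
    (h : ℝ) :
    ∫ x : ℝ, Complex.exp (I * ((h * x : ℝ) : ℂ)) * ((Real.exp (-b * x ^ 2) : ℝ) : ℂ) =
      ((2 * q * √Real.pi * Real.exp (-q ^ 2 * h ^ 2) : ℝ) : ℂ) := by
  have key := fourierIntegral_gaussian (b := (b : ℂ)) (by simpa using hb) (h : ℂ)
  have e1 : ((Real.pi : ℂ) / b) ^ (1 / 2 : ℂ) = ((2 * q * √Real.pi : ℝ) : ℂ) := by
    rw [show (Real.pi : ℂ) / b = ((Real.pi / b : ℝ) : ℂ) by push_cast; rfl,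
      show (1 / 2 : ℂ) = ((1 / 2 : ℝ) : ℂ) by push_cast; rfl,
      ← Complex.ofReal_cpow (by positivity), ← Real.sqrt_eq_rpow,
      show Real.pi / b = (2 * q) ^ 2 * Real.pi by
        rw [div_eq_iff hb.ne']; linear_combination (-Real.pi) * hbq,
      Real.sqrt_mul (by positivity), Real.sqrt_sq (by positivity)]
  have e2 : -h ^ 2 / (4 * b) = -q ^ 2 * h ^ 2 := by
    rw [div_eq_iff (by positivity)]; linear_combination h ^ 2 * hbq
  have e3 : Complex.exp (-(h : ℂ) ^ 2 / (4 * b)) = ((Real.exp (-q ^ 2 * h ^ 2) : ℝ) : ℂ) := by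
    rw [← e2]; push_cast; rfl
  rw [e1, e3, ← Complex.ofReal_mul] at key
  rw [← key]
  refine integral_congr_ae (.of_forall fun x => ?_)
  push_cast
  simp only [mul_assoc]

lemma integrable_cexp_mul_gaussian {b : ℝ} (hb : 0 < b) (h : ℝ) :
    Integrable fun x : ℝ =>
      Complex.exp (I * ((h * x : ℝ) : ℂ)) * ((Real.exp (-b * x ^ 2) : ℝ) : ℂ) := by
  refine (integrable_exp_neg_mul_sq hb).mono' (by fun_prop) (.of_forall fun x => le_of_eq ?_)
  rw [norm_mul, mul_comm I, Complex.norm_exp_ofReal_mul_I, one_mul, Complex.norm_real,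
    Real.norm_eq_abs, Real.abs_exp]

lemma integrable_sign_mul_cexp_mul_gaussian {b : ℝ} (hb : 0 < b) (h : ℝ) :
    Integrable fun x : ℝ => (Real.sign x : ℂ) *
      (Complex.exp (I * ((h * x : ℝ) : ℂ)) * ((Real.exp (-b * x ^ 2) : ℝ) : ℂ)) := by
  have hm : Measurable Real.sign :=
    Measurable.ite measurableSet_Iio measurable_const
      (Measurable.ite measurableSet_Ioi measurable_const measurable_const)
  refine (integrable_cexp_mul_gaussian hb h).bdd_mul (c := 1) (by fun_prop)
    (.of_forall fun x => ?_)
  rcases Real.sign_apply_eq x with hx | hx | hx <;> simp [hx]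

/-- Averaging the integrand over `x ↦ -x` cancels the cosine part and leaves the even function
`i sin (h |x|) e^{-b |x|²}`. -/
lemma integral_sign_mul_cexp_mul_gaussian {b : ℝ} (hb : 0 < b) (h : ℝ) :
    ∫ x : ℝ, (Real.sign x : ℂ) *
      (Complex.exp (I * ((h * x : ℝ) : ℂ)) * ((Real.exp (-b * x ^ 2) : ℝ) : ℂ)) =
      2 * I * (sineTransform b h : ℂ) := by
  set g : ℝ → ℂ := fun x => (Real.sign x : ℂ) *
      (Complex.exp (I * ((h * x : ℝ) : ℂ)) * ((Real.exp (-b * x ^ 2) : ℝ) : ℂ)) with hg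
  have hgi : Integrable g := integrable_sign_mul_cexp_mul_gaussian hb h
  have hsum : ∀ x : ℝ, g x + g (-x) =
      2 * I * ((Real.sin (h * |x|) * Real.exp (-b * |x| ^ 2) : ℝ) : ℂ) := by
    intro x
    have hs : (Real.sign x : ℂ) * (Real.sin (h * x) : ℂ) = (Real.sin (h * |x|) : ℂ) := by
      rcases lt_trichotomy x 0 with hx | hx | hx
      · simp [Real.sign_of_neg hx, abs_of_neg hx]
      · simp [hx]
      · simp [Real.sign_of_pos hx, abs_of_pos hx]
    have hp : Complex.exp (I * ((h * x : ℝ) : ℂ)) =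
        (Real.cos (h * x) : ℂ) + (Real.sin (h * x) : ℂ) * I := by
      rw [mul_comm, Complex.exp_mul_I, Complex.ofReal_cos, Complex.ofReal_sin]
    have hn : Complex.exp (I * ((h * -x : ℝ) : ℂ)) =
        (Real.cos (h * x) : ℂ) - (Real.sin (h * x) : ℂ) * I := by
      rw [mul_comm, Complex.exp_mul_I, ← Complex.ofReal_cos, ← Complex.ofReal_sin, mul_neg,
        Real.cos_neg, Real.sin_neg, Complex.ofReal_neg]
      ring
    simp only [hg]
    rw [hp, hn, Real.sign_neg, neg_sq, sq_abs, Complex.ofReal_mul, ← hs, Complex.ofReal_neg]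
    ring
  have h2 : ∫ x : ℝ, (g x + g (-x)) = 2 * ∫ x : ℝ, g x := by
    rw [integral_add hgi hgi.comp_neg, integral_neg_eq_self g]
    ring
  have h3 : ∫ x : ℝ, (g x + g (-x)) = 2 * (2 * I * (sineTransform b h : ℂ)) := by
    simp_rw [hsum]
    rw [integral_const_mul, integral_complex_ofReal,
      integral_comp_abs (f := fun x : ℝ => Real.sin (h * x) * Real.exp (-b * x ^ 2))]
    unfold sineTransform
    push_cast
    ring
  exact mul_left_cancel₀ two_ne_zero (h2.symm.trans h3)

/-- For `a_j, a_k > 0`, `a₊ = (a_j+a_k)/2` and `σ ∈ ℂ`, the Fourier transform of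
the cross-spectral density
`f(x) = (1/(2√π (a_j a_k)^{1/4})) exp(−x²(1/a_j + 1/a_k)/8) (Re σ + i sign(x) Im σ)`
is, for every `h`,
`∫_ℝ e^{ihx} f(x) dx = ((a_j a_k)^{1/4}/√a₊) [Re σ · exp(−(a_j a_k/a₊) h²)
   − Im σ · (2/√π) F(√(a_j a_k/a₊) h)]`, where `F` is Dawson's integral; moreover the Dawson
term is an odd function. -/
theorem stmt_14 (aj ak : ℝ) (haj : 0 < aj) (hak : 0 < ak) (σ : ℂ) (f : ℝ → ℂ)
    (hf : ∀ x : ℝ, f x =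
      ((1 / (2 * Real.sqrt Real.pi * (aj * ak) ^ ((1 : ℝ) / 4)) *
          Real.exp (-x ^ 2 * (1 / aj + 1 / ak) / 8) : ℝ) : ℂ) *
        ((σ.re : ℂ) + Complex.I * (Real.sign x : ℂ) * (σ.im : ℂ))) :
    (∀ h : ℝ, ∫ x : ℝ, Complex.exp (Complex.I * ((h * x : ℝ) : ℂ)) * f x =
      (((aj * ak) ^ ((1 : ℝ) / 4) / Real.sqrt ((aj + ak) / 2) *
        (σ.re * Real.exp (-(aj * ak / ((aj + ak) / 2)) * h ^ 2) -
          σ.im * (2 / Real.sqrt Real.pi) *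
            dawson (Real.sqrt (aj * ak / ((aj + ak) / 2)) * h)) : ℝ) : ℂ)) ∧
    (∀ z : ℝ, dawson (-z) = -dawson z) := by
  refine ⟨fun h => ?_, dawson_neg⟩
  set p : ℝ := (aj * ak) ^ ((1 : ℝ) / 4) with hp
  set s : ℝ := √((aj + ak) / 2) with hs
  set q : ℝ := √(aj * ak / ((aj + ak) / 2)) with hq
  set b : ℝ := (1 / aj + 1 / ak) / 8 with hb
  have hb0 : 0 < b := by positivity
  have hp0 : 0 < p := by positivity
  have hs0 : 0 < s := by positivity
  have hq0 : 0 < q := by positivity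
  have hpi : 0 < √Real.pi := by positivity
  have hq2 : q ^ 2 = aj * ak / ((aj + ak) / 2) := Real.sq_sqrt (by positivity)
  have hbq : 4 * b * q ^ 2 = 1 := by
    rw [hq2, hb]; field_simp; ring
  have hp2 : p ^ 2 = √(aj * ak) := by
    rw [hp, ← Real.rpow_natCast, ← Real.rpow_mul (by positivity), Real.sqrt_eq_rpow]
    norm_num
  have hqps : q = p ^ 2 / s := by
    rw [hq, hp2, hs, Real.sqrt_div (by positivity)]
  set c : ℝ := 1 / (2 * √Real.pi * p) with hc
  have hsplit : ∀ x : ℝ, Complex.exp (I * ((h * x : ℝ) : ℂ)) * f x =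
      ((c * σ.re : ℝ) : ℂ) *
        (Complex.exp (I * ((h * x : ℝ) : ℂ)) * ((Real.exp (-b * x ^ 2) : ℝ) : ℂ)) +
      (I * ((c * σ.im : ℝ) : ℂ)) * ((Real.sign x : ℂ) *
        (Complex.exp (I * ((h * x : ℝ) : ℂ)) * ((Real.exp (-b * x ^ 2) : ℝ) : ℂ))) := by
    intro x
    rw [hf, show -x ^ 2 * (1 / aj + 1 / ak) / 8 = -b * x ^ 2 by rw [hb]; ring]
    simp only [Complex.ofReal_mul]
    ring
  simp_rw [hsplit]
  rw [integral_add ((integrable_cexp_mul_gaussian hb0 h).const_mul _)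
      ((integrable_sign_mul_cexp_mul_gaussian hb0 h).const_mul _),
    integral_const_mul, integral_const_mul, integral_cexp_mul_gaussian hb0 hq0 hbq,
    integral_sign_mul_cexp_mul_gaussian hb0, sineTransform_eq_dawson hb0 hbq, ← hq2]
  have hreal : c * σ.re * (2 * q * √Real.pi * Real.exp (-q ^ 2 * h ^ 2)) -
      2 * (c * σ.im) * (2 * q * dawson (q * h)) =
      p / s * (σ.re * Real.exp (-q ^ 2 * h ^ 2) - σ.im * (2 / √Real.pi) * dawson (q * h)) := by
    -- The values of the two transcendental terms play no role; only `q = p² / s` does.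
    generalize Real.exp (-q ^ 2 * h ^ 2) = E
    generalize dawson (q * h) = D
    rw [hc, hqps]
    field_simp
  rw [← hreal]
  push_cast
  linear_combination (2 * (c : ℂ) * σ.im * (2 * q * (dawson (q * h) : ℂ))) * Complex.I_sq
end
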